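/- arXiv:2501.16520 — 9 statements merged into one kernel-verified Lean document; each statement's English description precedes it below -/
import Mathlib

section
/- Under Assumptions A1 and A2, there exists a constant M₁ > 0 such that for every x ∈ ℝⁿ and y ∈ ℝᵐ, ‖∇ℓ(x) − F(x,y)‖ ≤ M₁ ‖y − y*(x)‖. -/
open Set MeasureTheory
open scoped NNReal RealInnerProductSpace

noncomputable section

/-- `Vec k` is the Euclidean space `ℝ^k`. -/
abbrev Vec (k : ℕ) : Type := EuclideanSpace ℝ (Fin k)

/-- Partial gradient of `f(x, y)` with respect to `x`. -/
noncomputable def gradx {n m : ℕ} (f : Vec n → Vec m → ℝ) (x : Vec n) (y : Vec m) : Vec n :=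
  gradient (fun x' => f x' y) x

/-- Partial gradient of `f(x, y)` with respect to `y`. -/
noncomputable def grady {n m : ℕ} (f : Vec n → Vec m → ℝ) (x : Vec n) (y : Vec m) : Vec m :=
  gradient (fun y' => f x y') y

/-- The surrogate map `F(x,y) = ∇ₓ f(x,y) − (∇²_{yx} g(x,y))ᵀ v(x,y)`. -/
noncomputable def Fsur {n m : ℕ} (f : Vec n → Vec m → ℝ)
    (Gyx : Vec n → Vec m → Vec n →L[ℝ] Vec m) (v : Vec n → Vec m → Vec m)
    (x : Vec n) (y : Vec m) : Vec n :=
  gradx f x y - ContinuousLinearMap.adjoint (Gyx x y) (v x y)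

theorem aux_mono {E : Type*} [NormedAddCommGroup E] [InnerProductSpace ℝ E] [CompleteSpace E]
    {φ : E → ℝ} {G : E → E} {μ : ℝ} (hG : ∀ y, HasGradientAt φ (G y) y)
    (hsc : StrongConvexOn Set.univ μ φ) (a b : E) :
    μ * ‖b - a‖ ^ 2 ≤ ⟪G b - G a, b - a⟫ := by
  rw [strongConvexOn_iff_convex] at hsc
  have hline : ∀ t : ℝ, HasDerivAt (fun t : ℝ => AffineMap.lineMap (k := ℝ) a b t) (b - a) t :=
    fun t => AffineMap.hasDerivAt_lineMap
  have hc : ConvexOn ℝ Set.univ (fun t : ℝ => φ (AffineMap.lineMap a b t)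
      - μ / 2 * ‖(AffineMap.lineMap a b t : E)‖ ^ 2) := by
    have := hsc.comp_affineMap (AffineMap.lineMap (k := ℝ) a b)
    simpa [Function.comp_def] using this
  have hd : ∀ t : ℝ, HasDerivAt (fun t : ℝ => φ (AffineMap.lineMap a b t)
      - μ / 2 * ‖(AffineMap.lineMap a b t : E)‖ ^ 2)
      (⟪G (AffineMap.lineMap a b t), b - a⟫ - μ / 2 *
        (2 * ⟪(AffineMap.lineMap a b t : E), b - a⟫)) t := by
    intro t
    have h1 := (hG (AffineMap.lineMap a b t)).hasFDerivAt.comp_hasDerivAt t (hline t)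
    have h2 := (hline t).norm_sq
    have := h1.fun_sub (h2.const_mul (μ / 2))
    simpa [Function.comp_def] using this
  have hm := hc.monotoneOn_deriv (fun t _ => (hd t).differentiableAt)
  have := hm (Set.mem_univ 0) (Set.mem_univ 1) zero_le_one
  rw [(hd 0).deriv, (hd 1).deriv] at this
  simp only [AffineMap.lineMap_apply_zero, AffineMap.lineMap_apply_one] at this
  have e : ⟪b, b - a⟫ - ⟪a, b - a⟫ = ‖b - a‖ ^ 2 := by
    rw [← inner_sub_left, real_inner_self_eq_norm_sq]
  rw [inner_sub_left, ← e]
  linarith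

theorem aux_coer {E : Type*} [NormedAddCommGroup E] [InnerProductSpace ℝ E]
    {G : E → E} {T : E →L[ℝ] E} {μ : ℝ} {y : E}
    (hmono : ∀ a b, μ * ‖b - a‖ ^ 2 ≤ ⟪G b - G a, b - a⟫)
    (hT : HasFDerivAt G T y) (h : E) : μ * ‖h‖ ^ 2 ≤ ⟪T h, h⟫ := by
  have hl : HasDerivAt (fun t : ℝ => y + t • h) h 0 := by
    simpa using ((hasDerivAt_id (0:ℝ)).smul_const h).const_add y
  have h1 : HasDerivAt (fun t : ℝ => G (y + t • h)) (T h) 0 := by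
    have hT' : HasFDerivAt G T (y + (0:ℝ) • h) := by simpa using hT
    exact hT'.comp_hasDerivAt (0:ℝ) hl
  have h2 : HasDerivAt (fun t : ℝ => ⟪G (y + t • h), h⟫ - t * (μ * ‖h‖ ^ 2))
      (⟪T h, h⟫ - μ * ‖h‖ ^ 2) 0 := by
    have := (h1.inner ℝ (hasDerivAt_const (0:ℝ) h)).fun_sub
      ((hasDerivAt_id (0:ℝ)).mul_const (μ * ‖h‖ ^ 2))
    simpa using this
  have hm : Monotone (fun t : ℝ => ⟪G (y + t • h), h⟫ - t * (μ * ‖h‖ ^ 2)) := by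
    intro s t hst
    rcases hst.eq_or_lt with rfl | hst
    · exact le_rfl
    have := hmono (y + s • h) (y + t • h)
    have e : y + t • h - (y + s • h) = (t - s) • h := by rw [sub_smul]; abel
    rw [e, norm_smul, inner_smul_right, mul_pow, Real.norm_eq_abs, sq_abs, inner_sub_left] at this
    have hp : 0 < t - s := sub_pos.2 hst
    have h3 : (t - s) * ((t - s) * (μ * ‖h‖ ^ 2)) ≤
      (t - s) * (⟪G (y + t • h), h⟫ - ⟪G (y + s • h), h⟫) := by linarith
    have := le_of_mul_le_mul_left h3 hp
    simp only
    linarith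
  have := hm.deriv_nonneg (x := 0)
  rw [h2.deriv] at this
  linarith

theorem aux_lower {E : Type*} [NormedAddCommGroup E] [InnerProductSpace ℝ E]
    {u h : E} {μ : ℝ} (hu : μ * ‖h‖ ^ 2 ≤ ⟪u, h⟫) : μ * ‖h‖ ≤ ‖u‖ := by
  rcases (norm_nonneg h).eq_or_lt with h0 | h0
  · rw [← h0]; simp
  · have := real_inner_le_norm u h
    exact le_of_mul_le_mul_right (by nlinarith) h0

theorem aux_symm {E : Type*} [NormedAddCommGroup E] [InnerProductSpace ℝ E] [CompleteSpace E]
    {φ : E → ℝ} {G : E → E} {T : E →L[ℝ] E} {y : E} (hG : ∀ y, HasGradientAt φ (G y) y)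
    (hT : HasFDerivAt G T y) (u w : E) : ⟪T u, w⟫ = ⟪u, T w⟫ := by
  have h1 : HasFDerivAt (fun z => innerSL ℝ (G z)) ((innerSL ℝ).comp T) y :=
    (innerSL ℝ (E := E)).hasFDerivAt.comp y hT
  have := second_derivative_symmetric (f := φ) (f' := fun z => innerSL ℝ (G z))
    (fun z => (hG z).hasFDerivAt) h1 u w
  simpa [real_inner_comm] using this

open Asymptotics Filter Topology in
theorem aux_impl {X E : Type*} [NormedAddCommGroup X] [NormedSpace ℝ X]
    [NormedAddCommGroup E] [NormedSpace ℝ E]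
    {H : X × E → E} {A : X →L[ℝ] E} {T D : _} {s : X → E} {x : X} {μ L : ℝ} (hμ : 0 < μ)
    (hH : HasFDerivAt H (A.coprod (T : E →L[ℝ] E)) (x, s x))
    (hT : ∀ h, μ * ‖h‖ ≤ ‖T h‖) (hD : ∀ h, T ((D : X →L[ℝ] E) h) = - A h)
    (hs : ∀ x', ‖s x' - s x‖ ≤ L * ‖x' - x‖) (h0 : ∀ x', H (x', s x') = 0) :
    HasFDerivAt s D x := by
  have hbig : (fun x' => s x' - s x) =O[𝓝 x] fun x' => x' - x :=
    IsBigO.of_bound L (Eventually.of_forall hs)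
  have hpair : (fun x' => (x', s x') - (x, s x)) =O[𝓝 x] fun x' => x' - x :=
    (isBigO_refl (fun x' => x' - x) (𝓝 x)).prod_left hbig
  have hcont : Tendsto (fun x' => (x', s x')) (𝓝 x) (𝓝 (x, s x)) := by
    rw [tendsto_iff_norm_sub_tendsto_zero, ← tendsto_zero_iff_norm_tendsto_zero]
    refine hpair.trans_tendsto ?_
    have : Tendsto (fun x' => x' - x) (𝓝 x) (𝓝 (x - x)) := tendsto_id.sub_const x
    simpa using this
  have ho := (hH.isLittleO.comp_tendsto hcont).trans_isBigO hpair
  refine HasFDerivAt.of_isLittleO ?_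
  refine IsBigO.trans_isLittleO ?_ ho
  refine IsBigO.of_bound μ⁻¹ (Eventually.of_forall fun x' => ?_)
  have h1 := hT (s x' - s x - D (x' - x))
  have h2 : T (s x' - s x - D (x' - x)) = T (s x' - s x) + A (x' - x) := by
    rw [map_sub, hD, sub_neg_eq_add]
  simp only [Function.comp, h0, sub_self, zero_sub, norm_neg, Prod.mk_sub_mk,
    ContinuousLinearMap.coprod_apply]
  rw [inv_mul_eq_div, le_div_iff₀ hμ]
  rw [h2, add_comm] at h1
  linarith

/-- Under Assumptions A1 and A2, there exists `M₁ > 0` such that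
`‖∇ℓ(x) − F(x,y)‖ ≤ M₁ ‖y − y*(x)‖` for all `x, y`. -/
theorem stmt_0 {n m : ℕ} (f g : Vec n → Vec m → ℝ)
    -- Assumption A1
    (hf : ContDiff ℝ 1 (Function.uncurry f))
    (Cxf Cyf : ℝ) (hCxf : 0 < Cxf) (hCyf : 0 < Cyf)
    (hfxB : ∀ x y, ‖gradx f x y‖ ≤ Cxf)
    (hfyB : ∀ x y, ‖grady f x y‖ ≤ Cyf)
    (Lxf Lyf : ℝ≥0)
    (hfxL : LipschitzWith Lxf fun p : Vec n × Vec m => gradx f p.1 p.2)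
    (hfyL : LipschitzWith Lyf fun p : Vec n × Vec m => grady f p.1 p.2)
    -- Assumption A2
    (hg : ContDiff ℝ 2 (Function.uncurry g))
    (μg : ℝ) (hμg : 0 < μg)
    (hsc : ∀ x, StrongConvexOn Set.univ μg (g x))
    (Lyyg Lyxg : ℝ≥0)
    (hgyLy : ∀ x, LipschitzWith Lyyg fun y => grady g x y)
    (hgyLx : ∀ y, LipschitzWith Lyxg fun x => grady g x y)
    (Gyx : Vec n → Vec m → Vec n →L[ℝ] Vec m)
    (Gyy : Vec n → Vec m → Vec m →L[ℝ] Vec m)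
    (hGyx : ∀ x y, HasFDerivAt (fun x' => grady g x' y) (Gyx x y) x)
    (hGyy : ∀ x y, HasFDerivAt (fun y' => grady g x y') (Gyy x y) y)
    (Cyxg Cyyg : ℝ≥0)
    (hGyxL : LipschitzWith Cyxg fun p : Vec n × Vec m => Gyx p.1 p.2)
    (hGyyL : LipschitzWith Cyyg fun p : Vec n × Vec m => Gyy p.1 p.2)
    -- lower-level solution map and the surrogate direction `v`
    (ystar : Vec n → Vec m)
    (hystar : ∀ x, IsMinOn (g x) Set.univ (ystar x))
    (v : Vec n → Vec m → Vec m)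
    (hv : ∀ x y, Gyy x y (v x y) = grady f x y) :
    ∃ M₁ : ℝ, 0 < M₁ ∧ ∀ x y,
      ‖gradient (fun x' => f x' (ystar x')) x - Fsur f Gyx v x y‖ ≤ M₁ * ‖y - ystar x‖ := by
  have hgd : Differentiable ℝ (Function.uncurry g) := hg.differentiable (by norm_num)
  have hfd : Differentiable ℝ (Function.uncurry f) := hf.differentiable (by norm_num)
  have hGrad : ∀ x y, HasGradientAt (g x) (grady g x y) y := by
    intro x y
    have : DifferentiableAt ℝ (fun y' => Function.uncurry g (x, y')) y := by fun_prop
    exact DifferentiableAt.hasGradientAt this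
  have hFy : ∀ x y, HasGradientAt (f x) (grady f x y) y := by
    intro x y
    have : DifferentiableAt ℝ (fun y' => Function.uncurry f (x, y')) y := by fun_prop
    exact DifferentiableAt.hasGradientAt this
  have hFx : ∀ x y, HasGradientAt (fun x' => f x' y) (gradx f x y) x := by
    intro x y
    have : DifferentiableAt ℝ (fun x' => Function.uncurry f (x', y)) x := by fun_prop
    exact DifferentiableAt.hasGradientAt this
  have hmono : ∀ x a b, μg * ‖b - a‖ ^ 2 ≤ ⟪grady g x b - grady g x a, b - a⟫ :=
    fun x a b => aux_mono (hGrad x) (hsc x) a b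
  have hlow : ∀ x y h, μg * ‖h‖ ≤ ‖Gyy x y h‖ :=
    fun x y h => aux_lower (aux_coer (hmono x) (hGyy x y) h)
  have hsym : ∀ x y u w, ⟪Gyy x y u, w⟫ = ⟪u, Gyy x y w⟫ :=
    fun x y u w => aux_symm (hGrad x) (hGyy x y) u w
  have hzero : ∀ x, grady g x (ystar x) = 0 := by
    intro x
    have h1 : IsLocalMin (g x) (ystar x) := (hystar x).isLocalMin Filter.univ_mem
    have := h1.hasFDerivAt_eq_zero (hGrad x (ystar x)).hasFDerivAt
    simpa using this
  have hLip : ∀ x x', ‖ystar x' - ystar x‖ ≤ (Lyxg / μg) * ‖x' - x‖ := by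
    intro x x'
    have h1 := aux_lower (hmono x' (ystar x) (ystar x'))
    have h2 := (hgyLx (ystar x)).norm_sub_le x x'
    rw [hzero x', zero_sub, norm_neg] at h1
    simp only [hzero x, zero_sub, norm_neg] at h2
    rw [norm_sub_rev x x'] at h2
    rw [div_mul_eq_mul_div, le_div_iff₀ hμg]
    linarith
  have hD : ∀ x y, ∃ D : Vec n →L[ℝ] Vec m, ∀ h, Gyy x y (D h) = - Gyx x y h := by
    intro x y
    have hinj : Function.Injective (Gyy x y : Vec m →ₗ[ℝ] Vec m) := by
      rw [injective_iff_map_eq_zero]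
      intro h hh
      have h1 := hlow x y h
      have h2 : Gyy x y h = 0 := hh
      rw [h2, norm_zero] at h1
      have : ‖h‖ ≤ 0 := by
        by_contra hc
        push Not at hc
        nlinarith
      exact norm_le_zero_iff.1 this
    let e := LinearEquiv.ofInjectiveEndo (Gyy x y : Vec m →ₗ[ℝ] Vec m) hinj
    refine ⟨-(LinearMap.toContinuousLinearMap (e.symm : Vec m →ₗ[ℝ] Vec m)).comp (Gyx x y), ?_⟩
    intro h
    have : Gyy x y (e.symm (Gyx x y h)) = Gyx x y h := e.apply_symm_apply _
    simp [this]
  have hystarD : ∀ x, ∃ D : Vec n →L[ℝ] Vec m, HasFDerivAt ystar D x ∧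
      ∀ h, Gyy x (ystar x) (D h) = - Gyx x (ystar x) h := by
    intro x
    obtain ⟨D, hD⟩ := hD x (ystar x)
    refine ⟨D, ?_, hD⟩
    have hjoint := hasStrictFDerivAt_uncurry_coprod (𝕜 := ℝ) (u := (x, ystar x))
      (f := fun x y => grady g x y) (f₁ := Gyx) (f₂ := Gyy)
      (Filter.Eventually.of_forall fun p => hGyx p.1 p.2)
      (Filter.Eventually.of_forall fun p => hGyy p.1 p.2)
      hGyxL.continuous.continuousAt hGyyL.continuous.continuousAt
    exact aux_impl hμg hjoint.hasFDerivAt (hlow x (ystar x)) hD (hLip x) hzero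
  have hgrad : ∀ x, gradient (fun x' => f x' (ystar x')) x = Fsur f Gyx v x (ystar x) := by
    intro x
    obtain ⟨D, hD1, hD2⟩ := hystarD x
    refine HasGradientAt.gradient ?_
    have hf' := (hfd (x, ystar x)).hasFDerivAt
    set f' := fderiv ℝ (Function.uncurry f) (x, ystar x) with hf'def
    have h1 : HasFDerivAt (fun x' => f x' (ystar x'))
        (f'.comp ((ContinuousLinearMap.id ℝ (Vec n)).prod D)) x :=
      HasFDerivAt.comp (g := Function.uncurry f) x hf' ((hasFDerivAt_id x).prodMk hD1)
    have hx : ∀ h, f' (h, 0) = ⟪gradx f x (ystar x), h⟫ := by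
      have h2 : HasFDerivAt (fun x' => f x' (ystar x))
          (f'.comp ((ContinuousLinearMap.id ℝ (Vec n)).prod 0)) x :=
        HasFDerivAt.comp (g := Function.uncurry f) (f := fun x' => (x', ystar x)) x hf'
          ((hasFDerivAt_id x).prodMk (hasFDerivAt_const (ystar x) x))
      have := h2.unique (hFx x (ystar x)).hasFDerivAt
      intro h
      simpa using congrArg (fun T : Vec n →L[ℝ] ℝ => T h) this
    have hy : ∀ h, f' (0, h) = ⟪grady f x (ystar x), h⟫ := by
      have h2 : HasFDerivAt (f x)
          (f'.comp ((0 : Vec m →L[ℝ] Vec n).prod (ContinuousLinearMap.id ℝ (Vec m)))) (ystar x) :=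
        HasFDerivAt.comp (g := Function.uncurry f) (ystar x) hf'
          ((hasFDerivAt_const x (ystar x)).prodMk (hasFDerivAt_id (ystar x)))
      have := h2.unique (hFy x (ystar x)).hasFDerivAt
      intro h
      simpa using congrArg (fun T : Vec m →L[ℝ] ℝ => T h) this
    rw [hasGradientAt_iff_hasFDerivAt]
    refine h1.congr_fderiv ?_
    refine ContinuousLinearMap.ext fun h => ?_
    have e1 : (f'.comp ((ContinuousLinearMap.id ℝ (Vec n)).prod D)) h
        = f' (h, 0) + f' (0, D h) := by
      rw [← map_add]; simp
    rw [e1, hx, hy, ← hv x (ystar x), hsym, hD2, InnerProductSpace.toDual_apply_apply, Fsur,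
      inner_sub_left, ContinuousLinearMap.adjoint_inner_left, inner_neg_right]
    ring
  have hvB : ∀ x y, ‖v x y‖ ≤ Cyf / μg := by
    intro x y
    have h1 := hlow x y (v x y)
    rw [hv] at h1
    rw [le_div_iff₀ hμg]
    linarith [hfyB x y]
  have hdist : ∀ (x : Vec n) (y y' : Vec m), ‖((x, y) : Vec n × Vec m) - (x, y')‖ = ‖y - y'‖ := by
    intro x y y'
    simp [Prod.norm_def]
  refine ⟨Lxf + Lyxg * ((Lyf + Cyyg * (Cyf / μg)) / μg) + Cyxg * (Cyf / μg) + 1, by positivity, ?_⟩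
  intro x y
  rw [hgrad]
  set y' := ystar x with hy'
  set d := ‖y - y'‖ with hd
  have hd0 : 0 ≤ d := norm_nonneg _
  have a1 : ‖gradx f x y - gradx f x y'‖ ≤ Lxf * d := by
    have := hfxL.norm_sub_le (x, y) (x, y')
    rwa [hdist] at this
  have a2 : ‖grady f x y - grady f x y'‖ ≤ Lyf * d := by
    have := hfyL.norm_sub_le (x, y) (x, y')
    rwa [hdist] at this
  have a3 : ‖Gyx x y - Gyx x y'‖ ≤ Cyxg * d := by
    have := hGyxL.norm_sub_le (x, y) (x, y')
    rwa [hdist] at this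
  have a4 : ‖Gyy x y - Gyy x y'‖ ≤ Cyyg * d := by
    have := hGyyL.norm_sub_le (x, y) (x, y')
    rwa [hdist] at this
  have a5 : ‖Gyx x y‖ ≤ Lyxg := (hGyx x y).le_of_lipschitz (hgyLx y)
  have a6 : ‖v x y - v x y'‖ ≤ ((Lyf + Cyyg * (Cyf / μg)) / μg) * d := by
    have h1 := hlow x y (v x y - v x y')
    have e : Gyy x y (v x y - v x y')
        = (grady f x y - grady f x y') - (Gyy x y - Gyy x y') (v x y') := by
      rw [map_sub, _root_.sub_apply, hv, hv]; abel
    have h2 : ‖(Gyy x y - Gyy x y') (v x y')‖ ≤ (Cyyg * d) * (Cyf / μg) :=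
      (ContinuousLinearMap.le_opNorm _ _).trans
        (mul_le_mul a4 (hvB x y') (norm_nonneg _) (by positivity))
    rw [e] at h1
    have h3 := norm_sub_le (grady f x y - grady f x y') ((Gyy x y - Gyy x y') (v x y'))
    rw [div_mul_eq_mul_div, le_div_iff₀ hμg]
    linarith
  have e : Fsur f Gyx v x y' - Fsur f Gyx v x y
      = -(gradx f x y - gradx f x y') + (ContinuousLinearMap.adjoint (Gyx x y) (v x y - v x y')
        + ContinuousLinearMap.adjoint (Gyx x y - Gyx x y') (v x y')) := by
    simp only [Fsur, map_sub, _root_.sub_apply]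
    abel
  have b1 : ‖ContinuousLinearMap.adjoint (Gyx x y) (v x y - v x y')‖
      ≤ Lyxg * (((Lyf + Cyyg * (Cyf / μg)) / μg) * d) := by
    refine (ContinuousLinearMap.le_opNorm _ _).trans ?_
    rw [LinearIsometryEquiv.norm_map]
    exact mul_le_mul a5 a6 (norm_nonneg _) (by positivity)
  have b2 : ‖ContinuousLinearMap.adjoint (Gyx x y - Gyx x y') (v x y')‖
      ≤ (Cyxg * d) * (Cyf / μg) := by
    refine (ContinuousLinearMap.le_opNorm _ _).trans ?_
    rw [LinearIsometryEquiv.norm_map]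
    exact mul_le_mul a3 (hvB x y') (norm_nonneg _) (by positivity)
  rw [e]
  refine (norm_add_le _ _).trans ?_
  rw [norm_neg]
  have b3 := norm_add_le (ContinuousLinearMap.adjoint (Gyx x y) (v x y - v x y'))
    (ContinuousLinearMap.adjoint (Gyx x y - Gyx x y') (v x y'))
  linarith

end
end

section
/- Under Assumptions A1 and A2, the implicit objective ℓ(x) := f(x, y*(x)) is differentiable and its gradient (hyper-gradient) is given by ∇ℓ(x) = ∇_x f(x, y*(x)) − ∇²_{yx} g(x, y*(x))ᵀ v*(x), where v*(x) is the unique solution of the linear system ∇²_{yy} g(x, y*(x)) v*(x) = ∇_y f(x, y*(x)). -/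
open Set MeasureTheory
open scoped NNReal RealInnerProductSpace

noncomputable section

theorem aux_strong {m : ℕ} (h : Vec m → ℝ) (μ : ℝ) (hsc : StrongConvexOn Set.univ μ h)
    (y z : Vec m) (hd : DifferentiableAt ℝ h y) (hz : h z ≤ h y) :
    μ / 2 * ‖z - y‖ ≤ ‖gradient h y‖ := by
  have hgr : HasFDerivAt h (InnerProductSpace.toDual ℝ _ (gradient h y)) y :=
    hd.hasGradientAt.hasFDerivAt
  have hline : HasDerivAt (fun t : ℝ => y + t • (z - y)) (z - y) 0 := by
    simpa using ((hasDerivAt_id (0 : ℝ)).smul_const (z - y)).const_add y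
  have hder : HasDerivAt (fun t : ℝ => h (y + t • (z - y))) (inner ℝ (gradient h y) (z - y)) 0 := by
    have h0 : HasFDerivAt h (InnerProductSpace.toDual ℝ _ (gradient h y))
        (y + (0 : ℝ) • (z - y)) := by simpa using hgr
    simpa using! h0.comp_hasDerivAt (0 : ℝ) hline
  have hT := hder.tendsto_slope_zero_right
  have hR : Filter.Tendsto (fun t : ℝ => -((1 - t) * (μ / 2 * ‖y - z‖ ^ 2)))
      (nhdsWithin 0 (Set.Ioi 0)) (nhds (-((1 - 0) * (μ / 2 * ‖y - z‖ ^ 2)))) := by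
    apply Filter.Tendsto.mono_left _ nhdsWithin_le_nhds
    apply Continuous.tendsto (f := fun t : ℝ => -((1 - t) * (μ / 2 * ‖y - z‖ ^ 2)))
    fun_prop
  have hle := le_of_tendsto_of_tendsto hT hR (by
    have : Set.Ioo (0 : ℝ) 1 ∈ nhdsWithin (0 : ℝ) (Set.Ioi 0) := Ioo_mem_nhdsGT one_pos
    filter_upwards [this] with t ht
    have hc := hsc.2 (Set.mem_univ y) (Set.mem_univ z) (sub_nonneg.2 ht.2.le) ht.1.le
      (by ring : (1 - t) + t = 1)
    have he : (1 - t) • y + t • z = y + t • (z - y) := by module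
    rw [he] at hc
    simp only [smul_eq_mul, zero_add, zero_smul, add_zero] at hc ⊢
    rw [inv_mul_le_iff₀ ht.1]
    nlinarith [mul_le_mul_of_nonneg_left hz ht.1.le])
  have hcs := neg_le_of_abs_le (abs_real_inner_le_norm (gradient h y) (z - y))
  rw [norm_sub_rev y z] at hle
  rcases (norm_nonneg (z - y)).eq_or_lt with h0 | h0
  · rw [← h0]; simp
  · refine le_of_mul_le_mul_right ?_ h0
    nlinarith

/-- Under Assumptions A1 and A2, the implicit objective `ℓ(x) = f(x, y*(x))` is
differentiable with gradient `∇ℓ(x) = ∇ₓ f(x, y*(x)) − (∇²_{yx} g(x, y*(x)))ᵀ v*(x)`, where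
`v*(x)` solves `∇²_{yy} g(x, y*(x)) v*(x) = ∇_y f(x, y*(x))`. -/
theorem stmt_2 {n m : ℕ} (f g : Vec n → Vec m → ℝ)
    -- Assumption A1
    (hf : ContDiff ℝ 1 (Function.uncurry f))
    (Cxf Cyf : ℝ) (hCxf : 0 < Cxf) (hCyf : 0 < Cyf)
    (hfxB : ∀ x y, ‖gradx f x y‖ ≤ Cxf)
    (hfyB : ∀ x y, ‖grady f x y‖ ≤ Cyf)
    (Lxf Lyf : ℝ≥0)
    (hfxL : LipschitzWith Lxf fun p : Vec n × Vec m => gradx f p.1 p.2)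
    (hfyL : LipschitzWith Lyf fun p : Vec n × Vec m => grady f p.1 p.2)
    -- Assumption A2
    (hg : ContDiff ℝ 2 (Function.uncurry g))
    (μg : ℝ) (hμg : 0 < μg)
    (hsc : ∀ x, StrongConvexOn Set.univ μg (g x))
    (Lyyg Lyxg : ℝ≥0)
    (hgyLy : ∀ x, LipschitzWith Lyyg fun y => grady g x y)
    (hgyLx : ∀ y, LipschitzWith Lyxg fun x => grady g x y)
    (Gyx : Vec n → Vec m → Vec n →L[ℝ] Vec m)
    (Gyy : Vec n → Vec m → Vec m →L[ℝ] Vec m)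
    (hGyx : ∀ x y, HasFDerivAt (fun x' => grady g x' y) (Gyx x y) x)
    (hGyy : ∀ x y, HasFDerivAt (fun y' => grady g x y') (Gyy x y) y)
    (Cyxg Cyyg : ℝ≥0)
    (hGyxL : LipschitzWith Cyxg fun p : Vec n × Vec m => Gyx p.1 p.2)
    (hGyyL : LipschitzWith Cyyg fun p : Vec n × Vec m => Gyy p.1 p.2)
    -- the lower-level solution map and `v*`
    (ystar : Vec n → Vec m)
    (hystar : ∀ x, IsMinOn (g x) Set.univ (ystar x))
    (vstar : Vec n → Vec m)
    (hvstar : ∀ x, Gyy x (ystar x) (vstar x) = grady f x (ystar x)) :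
    ∀ x, HasGradientAt (fun x' => f x' (ystar x'))
      (gradx f x (ystar x) - ContinuousLinearMap.adjoint (Gyx x (ystar x)) (vstar x)) x := by
  intro x
  have hgd : ∀ x y, DifferentiableAt ℝ (g x) y := fun x y => by
    have := (hg.differentiable (by norm_num)) (x, y)
    exact this.comp (f := fun y' => (x, y')) y (by fun_prop)
  have hzero : ∀ x, grady g x (ystar x) = 0 := fun x => by
    have h1 : IsLocalMin (g x) (ystar x) := (hystar x).isLocalMin Filter.univ_mem
    have h2 := h1.fderiv_eq_zero
    show gradient (g x) (ystar x) = 0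
    rw [gradient, h2, map_zero]
  have hlip : ∀ x', ‖ystar x' - ystar x‖ ≤ (2 / μg * Lyxg) * ‖x' - x‖ := fun x' => by
    have h1 := aux_strong (g x') μg (hsc x') (ystar x) (ystar x') (hgd _ _)
      (hystar x' (Set.mem_univ _))
    have h2 := (hgyLx (ystar x)).dist_le_mul x' x
    simp only [dist_eq_norm, hzero, sub_zero] at h2
    have h3 : μg / 2 * ‖ystar x' - ystar x‖ ≤ Lyxg * ‖x' - x‖ := h1.trans h2
    have : ‖ystar x' - ystar x‖ = 2 / μg * (μg / 2 * ‖ystar x' - ystar x‖) := by field_simp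
    rw [this, mul_assoc]
    gcongr
  set y := ystar x with hy
  set v := vstar x with hv
  have hsymm : ∀ a b, inner ℝ (Gyy x y a) b = inner ℝ (Gyy x y b) a := fun a b => by
    have := second_derivative_symmetric (f := g x)
      (f' := fun y' => InnerProductSpace.toDual ℝ _ (grady g x y'))
      (f'' := (InnerProductSpace.toDual ℝ (Vec m)).toContinuousLinearEquiv.toContinuousLinearMap.comp
        (Gyy x y)) (x := y) (fun y' => (hgd x y').hasGradientAt.hasFDerivAt)
      ((InnerProductSpace.toDual ℝ (Vec m)).toContinuousLinearEquiv.toContinuousLinearMap.hasFDerivAt.comp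
        y (hGyy x y)) a b
    simpa using! this
  have hF : HasFDerivAt (fun p : Vec n × Vec m => grady g p.1 p.2)
      ((Gyx x y).coprod (Gyy x y)) (x, y) :=
    (hasStrictFDerivAt_uncurry_coprod (u := (x, y)) (f := grady g) (f₁ := Gyx) (f₂ := Gyy)
      (Filter.Eventually.of_forall fun p => hGyx p.1 p.2)
      (Filter.Eventually.of_forall fun p => hGyy p.1 p.2)
      hGyxL.continuous.continuousAt hGyyL.continuous.continuousAt).hasFDerivAt
  have hfd : HasFDerivAt (Function.uncurry f) (fderiv ℝ (Function.uncurry f) (x, y)) (x, y) :=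
    ((hf.differentiable (by norm_num)) (x, y)).hasFDerivAt
  set D := fderiv ℝ (Function.uncurry f) (x, y) with hD
  have hDx : ∀ a, D (a, 0) = inner ℝ (gradx f x y) a := fun a => by
    have h1 : HasFDerivAt (fun x' => f x' y) (D.comp (ContinuousLinearMap.inl ℝ _ _)) x :=
      hfd.comp (f := fun x' => (x', y)) x (hasFDerivAt_prodMk_left x y)
    have h2 := h1.differentiableAt.hasGradientAt.hasFDerivAt.unique h1
    simpa [gradx] using! (congrArg (fun L => L a) h2).symm
  have hDy : ∀ b, D (0, b) = inner ℝ (grady f x y) b := fun b => by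
    have h1 : HasFDerivAt (fun y' => f x y') (D.comp (ContinuousLinearMap.inr ℝ _ _)) y :=
      hfd.comp (f := fun y' => (x, y')) y (hasFDerivAt_prodMk_right x y)
    have h2 := h1.differentiableAt.hasGradientAt.hasFDerivAt.unique h1
    simpa [grady] using! (congrArg (fun L => L b) h2).symm
  have hH := hfd.sub ((innerSL ℝ v).hasFDerivAt.comp (x, y) hF)
  have hytend : Filter.Tendsto ystar (nhds x) (nhds y) := by
    rw [tendsto_iff_norm_sub_tendsto_zero]
    refine squeeze_zero (fun _ => norm_nonneg _) hlip ?_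
    have : Continuous fun x' => (2 / μg * Lyxg) * ‖x' - x‖ := by fun_prop
    simpa using this.tendsto x
  have htend : Filter.Tendsto (fun x' => (x', ystar x')) (nhds x) (nhds (x, y)) :=
    Filter.tendsto_id.prodMk_nhds hytend
  rw [hasGradientAt_iff_hasFDerivAt, hasFDerivAt_iff_isLittleO]
  rw [hasFDerivAt_iff_isLittleO] at hH
  have hbig : (fun x' => (x', ystar x') - (x, y)) =O[nhds x] fun x' => x' - x := by
    refine Asymptotics.IsBigO.prod_left (Asymptotics.isBigO_refl _ _) ?_
    exact Asymptotics.IsBigO.of_bound _ (Filter.Eventually.of_forall hlip)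
  refine ((hH.comp_tendsto htend).trans_isBigO hbig).congr_left fun x' => ?_
  have hsplit : D (x' - x, ystar x' - y) = D (x' - x, 0) + D (0, ystar x' - y) := by
    rw [← map_add]; simp
  have hvs : inner ℝ v (Gyy x y (ystar x' - y)) = inner ℝ (grady f x y) (ystar x' - y) := by
    rw [← hvstar x, real_inner_comm, hsymm]
  have hz2 : grady g x y = 0 := hzero x
  simp only [Function.comp_apply, Pi.sub_apply, Function.uncurry_apply_pair, hzero, hz2,
    Prod.mk_sub_mk, ContinuousLinearMap.sub_apply, ContinuousLinearMap.comp_apply,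
    ContinuousLinearMap.coprod_apply, innerSL_apply_apply, inner_zero_right, hsplit, hDx, hDy,
    inner_add_right, hvs, InnerProductSpace.toDual_apply_apply, inner_sub_left,
    ContinuousLinearMap.adjoint_inner_left, ← hy, ← hv]
  ring

end
end

section
/- Fix (x,y) ∈ ℝⁿ × ℝᵐ and α > 0, and suppose ∇²_{yy} g(x,y) ⪰ μ_g I with μ_g > 0. Then the pair (u*, v*) given by u* = −∇_x f(x,y) − ∇²_{yx} g(x,y)ᵀ λ and v* = −∇_y f(x,y) − ∇²_{yy} g(x,y) λ, with λ = −(∇²_{yx} g ∇²_{yx} gᵀ + (∇²_{yy} g)²)⁻¹ (∇²_{yx} g ∇_x f + ∇²_{yy} g ∇_y f − α ∇_y g) (all evaluated at (x,y)), is the unique minimizer of QP (SF); in particular (u*, v*) satisfies the equality constraint of QP (SF) and ½‖u* + ∇_x f‖² + ½‖v* + ∇_y f‖² ≤ ½‖u + ∇_x f‖² + ½‖v + ∇_y f‖² for every feasible (u,v). -/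
open Set MeasureTheory
open scoped NNReal RealInnerProductSpace

noncomputable section

theorem aux_symm_s3 {n m : ℕ} (g : Vec n → Vec m → ℝ)
    (hg : ContDiff ℝ 2 (Function.uncurry g)) (x : Vec n) (y : Vec m)
    (H : Vec m →L[ℝ] Vec m)
    (hH : HasFDerivAt (fun y' => grady g x y') H y) (a b : Vec m) :
    ⟪H a, b⟫ = ⟪a, H b⟫ := by
  have hd : Differentiable ℝ (fun y' => g x y') := by
    have h1 : Differentiable ℝ (Function.uncurry g) := hg.differentiable (by norm_num)
    have h2 : Differentiable ℝ (fun y' : Vec m => (x, y')) := by fun_prop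
    exact h1.comp h2
  have h1 : ∀ y', HasFDerivAt (fun y' => g x y') (innerSL ℝ (grady g x y')) y' := fun y' =>
    (hd y').hasGradientAt.hasFDerivAt
  have h2 : HasFDerivAt (fun y' => innerSL ℝ (grady g x y')) ((innerSL ℝ).comp H) y :=
    ((innerSL ℝ (E := Vec m)).hasFDerivAt).comp y hH
  have h3 := second_derivative_symmetric h1 h2 a b
  simp only [ContinuousLinearMap.comp_apply, innerSL_apply_apply] at h3
  rw [h3, real_inner_comm]

theorem aux_key {n m : ℕ} (G : Vec n →L[ℝ] Vec m) (H : Vec m →L[ℝ] Vec m)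
    (hs : ∀ a b, ⟪H a, b⟫ = ⟪a, H b⟫) (p : Vec n) (q c lam : Vec m)
    (us : Vec n) (vs : Vec m)
    (hus : us = -p - ContinuousLinearMap.adjoint G lam) (hvs : vs = -q - H lam)
    (hfe : G us + H vs + c = 0) (u : Vec n) (v : Vec m) (h : G u + H v + c = 0) :
    ‖u + p‖ ^ 2 + ‖v + q‖ ^ 2
      = ‖us + p‖ ^ 2 + ‖vs + q‖ ^ 2 + ‖u - us‖ ^ 2 + ‖v - vs‖ ^ 2 := by
  have e1 : u + p = (us + p) + (u - us) := by abel
  have e2 : v + q = (vs + q) + (v - vs) := by abel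
  have e3 : us + p = - ContinuousLinearMap.adjoint G lam := by rw [hus]; abel
  have e4 : vs + q = - H lam := by rw [hvs]; abel
  have e5 : G (u - us) + H (v - vs) = 0 := by
    rw [map_sub, map_sub]
    have : G u - G us + (H v - H vs) = (G u + H v + c) - (G us + H vs + c) := by abel
    rw [this, h, hfe, sub_zero]
  have e6 : ⟪us + p, u - us⟫ + ⟪vs + q, v - vs⟫ = 0 := by
    rw [e3, e4, inner_neg_left, inner_neg_left, ContinuousLinearMap.adjoint_inner_left, hs,
      ← neg_add, ← inner_add_right, e5, inner_zero_right, neg_zero]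
  rw [e1, e2, norm_add_sq_real (us + p), norm_add_sq_real (vs + q)]
  linarith

/-- at a fixed point `(x,y)` with `∇²_{yy} g(x,y) ⪰ μ_g I`, the pair
`(u*, v*) = (−∇ₓf − (∇²_{yx}g)ᵀ λ, −∇_y f − ∇²_{yy}g λ)` with
`λ = −(∇²_{yx}g (∇²_{yx}g)ᵀ + (∇²_{yy}g)²)⁻¹ (∇²_{yx}g ∇ₓf + ∇²_{yy}g ∇_y f − α ∇_y g)`
is the unique minimizer of the QP (SF). -/
theorem stmt_3 {n m : ℕ} (f g : Vec n → Vec m → ℝ)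
    (hf : ContDiff ℝ 1 (Function.uncurry f))
    (hg : ContDiff ℝ 2 (Function.uncurry g))
    (Gyx : Vec n → Vec m → Vec n →L[ℝ] Vec m)
    (Gyy : Vec n → Vec m → Vec m →L[ℝ] Vec m)
    (hGyx : ∀ x y, HasFDerivAt (fun x' => grady g x' y) (Gyx x y) x)
    (hGyy : ∀ x y, HasFDerivAt (fun y' => grady g x y') (Gyy x y) y)
    (x : Vec n) (y : Vec m) (α : ℝ) (hα : 0 < α)
    (μg : ℝ) (hμg : 0 < μg)
    -- `∇²_{yy} g(x,y) ⪰ μ_g I`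
    (hpos : ∀ w : Vec m, μg * ‖w‖ ^ 2 ≤ ⟪w, Gyy x y w⟫)
    -- `λ` is the (unique) solution of the linear system defining
    -- `λ = −(∇²_{yx}g (∇²_{yx}g)ᵀ + (∇²_{yy}g)²)⁻¹ (∇²_{yx}g ∇ₓf + ∇²_{yy}g ∇_y f − α ∇_y g)`
    (lam : Vec m)
    (hlam : (Gyx x y ∘L ContinuousLinearMap.adjoint (Gyx x y) + Gyy x y ∘L Gyy x y) lam
      = -(Gyx x y (gradx f x y) + Gyy x y (grady f x y) - α • grady g x y))
    (ustar : Vec n) (vstar : Vec m)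
    (hustar : ustar = -gradx f x y - ContinuousLinearMap.adjoint (Gyx x y) lam)
    (hvstar : vstar = -grady f x y - Gyy x y lam) :
    -- `(u*, v*)` is feasible for QP (SF),
    (Gyx x y ustar + Gyy x y vstar + α • grady g x y = 0) ∧
    -- it minimizes the objective among all feasible points,
    (∀ u v, Gyx x y u + Gyy x y v + α • grady g x y = 0 →
      (1:ℝ)/2 * ‖ustar + gradx f x y‖ ^ 2 + (1:ℝ)/2 * ‖vstar + grady f x y‖ ^ 2
        ≤ (1:ℝ)/2 * ‖u + gradx f x y‖ ^ 2 + (1:ℝ)/2 * ‖v + grady f x y‖ ^ 2) ∧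
    -- and it is the unique such minimizer.
    (∀ u v, Gyx x y u + Gyy x y v + α • grady g x y = 0 →
      (1:ℝ)/2 * ‖u + gradx f x y‖ ^ 2 + (1:ℝ)/2 * ‖v + grady f x y‖ ^ 2
        ≤ (1:ℝ)/2 * ‖ustar + gradx f x y‖ ^ 2 + (1:ℝ)/2 * ‖vstar + grady f x y‖ ^ 2 →
      u = ustar ∧ v = vstar) := by
  have hs := aux_symm_s3 g hg x y (Gyy x y) (hGyy x y)
  have hfe : Gyx x y ustar + Gyy x y vstar + α • grady g x y = 0 := by
    simp only [ContinuousLinearMap.add_apply, ContinuousLinearMap.comp_apply] at hlam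
    rw [hustar, hvstar, map_sub, map_sub, map_neg, map_neg]
    have := eq_sub_of_add_eq hlam
    rw [this]
    abel
  have key := aux_key (Gyx x y) (Gyy x y) hs (gradx f x y) (grady f x y) (α • grady g x y) lam
    ustar vstar hustar hvstar hfe
  refine ⟨hfe, fun u v h => ?_, fun u v h hle => ?_⟩
  · have := key u v h
    nlinarith [sq_nonneg ‖u - ustar‖, sq_nonneg ‖v - vstar‖]
  · have := key u v h
    have h1 := sq_nonneg ‖u - ustar‖
    have h2 := sq_nonneg ‖v - vstar‖
    have h3 : ‖u - ustar‖ ^ 2 = 0 := by linarith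
    have h4 : ‖v - vstar‖ ^ 2 = 0 := by linarith
    exact ⟨sub_eq_zero.mp (norm_eq_zero.mp (pow_eq_zero_iff two_ne_zero |>.mp h3)),
      sub_eq_zero.mp (norm_eq_zero.mp (pow_eq_zero_iff two_ne_zero |>.mp h4))⟩

end
end

section
/- Fix (x,y) ∈ ℝⁿ × ℝᵐ and α > 0. If (u,v) = (0,0) is a minimizer of QP (SF) at (x,y), then there exists λ ∈ ℝᵐ such that the KKT conditions of the single-level reduction hold at (x,y): ∇_x f(x,y) + ∇²_{yx} g(x,y)ᵀ λ = 0, ∇_y f(x,y) + ∇²_{yy} g(x,y) λ = 0, and ∇_y g(x,y) = 0. -/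
open Set MeasureTheory
open scoped NNReal RealInnerProductSpace

noncomputable section

theorem exists_adjoint_eq {E F : Type*} [NormedAddCommGroup E] [InnerProductSpace ℝ E]
    [NormedAddCommGroup F] [InnerProductSpace ℝ F] [CompleteSpace E] [CompleteSpace F]
    [FiniteDimensional ℝ F] (T : E →L[ℝ] F) (w : E) (hw : w ∈ (T.ker)ᗮ) :
    ∃ μ, ContinuousLinearMap.adjoint T μ = w := by
  rw [ContinuousLinearMap.orthogonal_ker,
    (Submodule.closed_of_finiteDimensional _).submodule_topologicalClosure_eq] at hw
  exact hw

/-- if `(u,v) = (0,0)` is a minimizer of the QP (SF) at `(x,y)`, then there exists a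
multiplier `λ` such that the KKT conditions of the single-level reduction hold at `(x,y)`. -/
theorem stmt_4 {n m : ℕ} (f g : Vec n → Vec m → ℝ)
    (hf : ContDiff ℝ 1 (Function.uncurry f))
    (hg : ContDiff ℝ 2 (Function.uncurry g))
    (Gyx : Vec n → Vec m → Vec n →L[ℝ] Vec m)
    (Gyy : Vec n → Vec m → Vec m →L[ℝ] Vec m)
    (hGyx : ∀ x y, HasFDerivAt (fun x' => grady g x' y) (Gyx x y) x)
    (hGyy : ∀ x y, HasFDerivAt (fun y' => grady g x y') (Gyy x y) y)
    (x : Vec n) (y : Vec m) (α : ℝ) (hα : 0 < α)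
    -- `(0,0)` is feasible for QP (SF),
    (h0feas : Gyx x y (0 : Vec n) + Gyy x y (0 : Vec m) + α • grady g x y = 0)
    -- and `(0,0)` minimizes the objective among all feasible points.
    (h0min : ∀ u v, Gyx x y u + Gyy x y v + α • grady g x y = 0 →
      (1:ℝ)/2 * ‖(0 : Vec n) + gradx f x y‖ ^ 2 + (1:ℝ)/2 * ‖(0 : Vec m) + grady f x y‖ ^ 2
        ≤ (1:ℝ)/2 * ‖u + gradx f x y‖ ^ 2 + (1:ℝ)/2 * ‖v + grady f x y‖ ^ 2) :
    ∃ lam : Vec m,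
      gradx f x y + ContinuousLinearMap.adjoint (Gyx x y) lam = 0 ∧
      grady f x y + Gyy x y lam = 0 ∧
      grady g x y = 0 := by
  have hgy : grady g x y = 0 := by
    simp only [map_zero, zero_add] at h0feas
    exact (smul_eq_zero.mp h0feas).resolve_left hα.ne'
  -- symmetry of the Hessian
  have hsym : ∀ v w : Vec m, ⟪Gyy x y v, w⟫ = ⟪Gyy x y w, v⟫ := by
    have hφ : ∀ y', HasFDerivAt (fun y' => g x y') (innerSL ℝ (grady g x y')) y' := by
      intro y'
      have hd : DifferentiableAt ℝ (fun y' => g x y') y' := by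
        have h1 : Differentiable ℝ (Function.uncurry g) := hg.differentiable (by norm_num)
        have h2 : Differentiable ℝ (fun y' : Vec m => Function.uncurry g (x, y')) := by
          fun_prop
        exact h2 y'
      exact hd.hasGradientAt.hasFDerivAt
    have h2 : HasFDerivAt (fun y' => innerSL ℝ (grady g x y'))
        ((innerSL ℝ : Vec m →L[ℝ] Vec m →L[ℝ] ℝ).comp (Gyy x y)) y :=
      (innerSL ℝ : Vec m →L[ℝ] Vec m →L[ℝ] ℝ).hasFDerivAt.comp y (hGyy x y)
    intro v w
    have := second_derivative_symmetric hφ h2 v w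
    simpa using this
  -- orthogonality
  have horth : ∀ u v, Gyx x y u + Gyy x y v = 0 →
      ⟪u, gradx f x y⟫ + ⟪v, grady f x y⟫ = 0 := by
    intro u v huv
    have key : ∀ t : ℝ, 0 ≤ 2 * t * (⟪u, gradx f x y⟫ + ⟪v, grady f x y⟫)
        + t ^ 2 * (‖u‖ ^ 2 + ‖v‖ ^ 2) := by
      intro t
      have h := h0min (t • u) (t • v) (by
        rw [hgy, map_smul, map_smul, ← smul_add, huv]; simp)
      rw [norm_add_sq_real (t • u), norm_add_sq_real (t • v), zero_add, zero_add,
        norm_smul, norm_smul, real_inner_smul_left, real_inner_smul_left, mul_pow, mul_pow,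
        Real.norm_eq_abs, sq_abs] at h
      linarith
    set s := ⟪u, gradx f x y⟫ + ⟪v, grady f x y⟫ with hs
    set N := ‖u‖ ^ 2 + ‖v‖ ^ 2 with hN
    have hN0 : 0 ≤ N := by positivity
    have h1 := key (-s / (N + 1))
    have h2 : 2 * (-s / (N + 1)) * s + (-s / (N + 1)) ^ 2 * N
        = - (s ^ 2 * (N + 2)) / (N + 1) ^ 2 := by
      field_simp; ring
    rw [h2] at h1
    have h3 : 0 ≤ - (s ^ 2 * (N + 2)) := by
      by_contra hc
      push Not at hc
      exact absurd h1 (not_le.mpr (div_neg_of_neg_of_pos hc (by positivity)))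
    have h4 : s ^ 2 ≤ 0 := by nlinarith [sq_nonneg s, mul_nonneg (sq_nonneg s) hN0]
    exact pow_eq_zero_iff (two_ne_zero) |>.mp (le_antisymm h4 (sq_nonneg s))
  let T : WithLp 2 (Vec n × Vec m) →L[ℝ] Vec m :=
    ((Gyx x y).coprod (Gyy x y)).comp
      (WithLp.prodContinuousLinearEquiv 2 ℝ (Vec n) (Vec m)).toContinuousLinearMap
  have hT : ∀ p, T p = Gyx x y p.fst + Gyy x y p.snd := fun p => rfl
  have hmem : WithLp.toLp 2 (gradx f x y, grady f x y) ∈ (T.ker)ᗮ := by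
    rw [Submodule.mem_orthogonal]
    intro p hp
    have := horth p.fst p.snd (by rw [← hT]; exact hp)
    simpa [WithLp.prod_inner_apply] using this
  obtain ⟨μ, hμ⟩ := exists_adjoint_eq T _ hmem
  have hμ' : ∀ u v, ⟪μ, Gyx x y u + Gyy x y v⟫ = ⟪gradx f x y, u⟫ + ⟪grady f x y, v⟫ := by
    intro u v
    have := ContinuousLinearMap.adjoint_inner_left T (WithLp.toLp 2 (u, v)) μ
    rw [hμ, hT] at this
    simpa [WithLp.prod_inner_apply] using this.symm
  refine ⟨-μ, ?_, ?_, hgy⟩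
  · refine ext_inner_right ℝ fun u => ?_
    have := hμ' u 0
    simp only [map_zero, add_zero, inner_zero_right] at this
    rw [inner_add_left, map_neg, inner_neg_left, ContinuousLinearMap.adjoint_inner_left, this]
    simp
  · refine ext_inner_right ℝ fun v => ?_
    have := hμ' 0 v
    simp only [map_zero, zero_add, inner_zero_right] at this
    rw [inner_add_left, map_neg, inner_neg_left, hsym, real_inner_comm μ, this]
    simp

end
end

section
/- Let α > 0 and let t ↦ (x(t), y(t)), t ≥ 0, be a continuously differentiable solution of the safe gradient flow (SGF), under Assumptions A1 and A2. Then the trajectories are contracted towards the manifold M = {(x,y) : ∇_y g(x,y) = 0} exponentially fast: ‖∇_y g(x(t), y(t))‖ = e^{−α t} ‖∇_y g(x(0), y(0))‖ for all t ≥ 0. -/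
open Set MeasureTheory
open scoped NNReal RealInnerProductSpace

noncomputable section

/-- along the safe gradient flow (SGF), trajectories contract towards the manifold
`M = {(x,y) : ∇_y g(x,y) = 0}` exponentially fast:
`‖∇_y g(x(t), y(t))‖ = e^{−α t} ‖∇_y g(x(0), y(0))‖` for all `t ≥ 0`. -/
theorem stmt_5 {n m : ℕ} (f g : Vec n → Vec m → ℝ)
    -- Assumption A1
    (hf : ContDiff ℝ 1 (Function.uncurry f))
    (Cxf Cyf : ℝ) (hCxf : 0 < Cxf) (hCyf : 0 < Cyf)
    (hfxB : ∀ x y, ‖gradx f x y‖ ≤ Cxf)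
    (hfyB : ∀ x y, ‖grady f x y‖ ≤ Cyf)
    (Lxf Lyf : ℝ≥0)
    (hfxL : LipschitzWith Lxf fun p : Vec n × Vec m => gradx f p.1 p.2)
    (hfyL : LipschitzWith Lyf fun p : Vec n × Vec m => grady f p.1 p.2)
    -- Assumption A2
    (hg : ContDiff ℝ 2 (Function.uncurry g))
    (μg : ℝ) (hμg : 0 < μg)
    (hsc : ∀ x, StrongConvexOn Set.univ μg (g x))
    (Lyyg Lyxg : ℝ≥0)
    (hgyLy : ∀ x, LipschitzWith Lyyg fun y => grady g x y)
    (hgyLx : ∀ y, LipschitzWith Lyxg fun x => grady g x y)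
    (Gyx : Vec n → Vec m → Vec n →L[ℝ] Vec m)
    (Gyy : Vec n → Vec m → Vec m →L[ℝ] Vec m)
    (hGyx : ∀ x y, HasFDerivAt (fun x' => grady g x' y) (Gyx x y) x)
    (hGyy : ∀ x y, HasFDerivAt (fun y' => grady g x y') (Gyy x y) y)
    (Cyxg Cyyg : ℝ≥0)
    (hGyxL : LipschitzWith Cyxg fun p : Vec n × Vec m => Gyx p.1 p.2)
    (hGyyL : LipschitzWith Cyyg fun p : Vec n × Vec m => Gyy p.1 p.2)
    -- the safe gradient flow (SGF) for a parameter `α > 0`, on the time interval `t ≥ 0`: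
    -- `lam t` is the dual multiplier `λ(x(t), y(t))`, characterized as the solution of
    -- `(∇²_{yx}g (∇²_{yx}g)ᵀ + (∇²_{yy}g)²) λ = −(∇²_{yx}g ∇ₓf + ∇²_{yy}g ∇_y f − α ∇_y g)`
    (α : ℝ) (hα : 0 < α)
    (x : ℝ → Vec n) (y : ℝ → Vec m) (lam : ℝ → Vec m)
    (hlam : ∀ t, 0 ≤ t →
      (Gyx (x t) (y t) ∘L ContinuousLinearMap.adjoint (Gyx (x t) (y t))
        + Gyy (x t) (y t) ∘L Gyy (x t) (y t)) (lam t)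
      = -(Gyx (x t) (y t) (gradx f (x t) (y t)) + Gyy (x t) (y t) (grady f (x t) (y t))
          - α • grady g (x t) (y t)))
    (hx : ∀ t, 0 ≤ t → HasDerivAt x
      (-gradx f (x t) (y t) - ContinuousLinearMap.adjoint (Gyx (x t) (y t)) (lam t)) t)
    (hy : ∀ t, 0 ≤ t → HasDerivAt y
      (-grady f (x t) (y t) - Gyy (x t) (y t) (lam t)) t)
    :
    ∀ t, 0 ≤ t →
      ‖grady g (x t) (y t)‖ = Real.exp (-α * t) * ‖grady g (x 0) (y 0)‖ := by
  have hG : Differentiable ℝ (fun p : Vec n × Vec m => grady g p.1 p.2) := by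
    have h1 : (fun p : Vec n × Vec m => grady g p.1 p.2) = fun p =>
        (InnerProductSpace.toDual ℝ (Vec m)).symm
          ((fderiv ℝ (Function.uncurry g) p).comp (ContinuousLinearMap.inr ℝ (Vec n) (Vec m))) := by
      funext p
      have h2 : HasFDerivAt (Function.uncurry g) (fderiv ℝ (Function.uncurry g) p) (p.1, p.2) :=
        (hg.differentiable (by norm_num) p).hasFDerivAt
      have h3 : HasFDerivAt (fun y' => g p.1 y') ((fderiv ℝ (Function.uncurry g) p).comp
          (ContinuousLinearMap.inr ℝ (Vec n) (Vec m))) p.2 :=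
        h2.comp p.2 (hasFDerivAt_prodMk_right p.1 p.2)
      unfold grady gradient
      rw [h3.fderiv]
    rw [h1]
    have h4 : Differentiable ℝ (fderiv ℝ (Function.uncurry g)) :=
      (hg.fderiv_right (m := 1) (by norm_num)).differentiable (by norm_num)
    exact (InnerProductSpace.toDual ℝ (Vec m)).symm.toContinuousLinearEquiv.differentiable.comp
      (h4.clm_comp (differentiable_const _))
  have hd : ∀ s, 0 ≤ s → HasDerivAt (fun s => grady g (x s) (y s))
      (-(α • grady g (x s) (y s))) s := by
    intro s hs
    have h0 := (hG (x s, y s)).hasFDerivAt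
    have hX0 := HasFDerivAt.comp (𝕜 := ℝ) (f := fun e : Vec n => (e, y s)) (g := fun p : Vec n × Vec m => grady g p.1 p.2) (x s) h0
      (hasFDerivAt_prodMk_left (x s) (y s))
    have hX := hX0.unique (hGyx (x s) (y s))
    have hY0 := HasFDerivAt.comp (𝕜 := ℝ) (f := fun e : Vec m => (x s, e)) (g := fun p : Vec n × Vec m => grady g p.1 p.2) (y s) h0
      (hasFDerivAt_prodMk_right (x s) (y s))
    have hY := hY0.unique (hGyy (x s) (y s))
    have h5 := h0.comp_hasDerivAt s ((hx s hs).prodMk (hy s hs))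
    refine h5.congr_deriv ?_
    have key : ∀ (u : Vec n) (v : Vec m),
        (fderiv ℝ (fun p : Vec n × Vec m => grady g p.1 p.2) (x s, y s)) (u, v)
          = Gyx (x s) (y s) u + Gyy (x s) (y s) v := by
      intro u v
      rw [← hX, ← hY]
      simp [← map_add]
    rw [key]
    have hl := hlam s hs
    simp only [add_apply, ContinuousLinearMap.comp_apply] at hl
    simp only [map_sub, map_neg]
    linear_combination (norm := module) (-1 : ℝ) • hl
  intro t ht
  have hc : ∀ s, 0 ≤ s → HasDerivAt
      (fun s => Real.exp (α * s) • grady g (x s) (y s)) 0 s := by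
    intro s hs
    have he : HasDerivAt (fun s => Real.exp (α * s)) (Real.exp (α * s) * (α * 1)) s :=
      ((hasDerivAt_id s).const_mul α).exp
    refine (he.smul (hd s hs)).congr_deriv ?_
    module
  have hconst := constant_of_has_deriv_right_zero (a := 0) (b := t)
    (fun s hs => (hc s hs.1).continuousAt.continuousWithinAt)
    (fun s hs => (hc s hs.1).hasDerivWithinAt) t ⟨ht, le_rfl⟩
  simp only [mul_zero, Real.exp_zero, one_smul] at hconst
  rw [← hconst, norm_smul, Real.norm_eq_abs, Real.abs_exp, ← mul_assoc, ← Real.exp_add]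
  simp

end
end

section
/- Let α > 0 and let t ↦ (x(t), y(t)), t ≥ 0, be a continuously differentiable solution of the safe gradient flow (SGF), under Assumptions A1 and A2. Set c := μ_g² / (μ_g² + (L_{yx}^g)²), β := (1/μ_g²)(C_{yx}^g C_x^f + C_{yy}^g C_y^f + α‖∇_y g(x(0),y(0))‖), and define the Lyapunov function E(t) := f(x(t),y(t)) − f* + β ‖∇_y g(x(t),y(t))‖ + c ∫₀ᵗ ‖F(x(τ),y(τ))‖² dτ, where f* is the global optimal value of the single-level problem min f(x,y) subject to ∇_y g(x,y) = 0. Then E(t) ≤ E(0) for all t ≥ 0, and moreover (1/t) ∫₀ᵗ ‖∇ℓ(x(τ))‖² dτ ≤ 2E(0)/(c t) + ((1 − e^{−2αt})/(α t)) (M₁²/μ_g²) ‖∇_y g(x(0), y(0))‖² for all t > 0. -/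
open Set MeasureTheory
open scoped NNReal RealInnerProductSpace

noncomputable section

lemma aux_inner_grady {n m : ℕ} {f : Vec n → Vec m → ℝ} (hf : Differentiable ℝ (Function.uncurry f))
    (x : Vec n) (y w : Vec m) :
    inner ℝ (grady f x y) w = fderiv ℝ (Function.uncurry f) (x, y) (0, w) := by
  have h : HasFDerivAt (fun y' => f x y')
      ((fderiv ℝ (Function.uncurry f) (x, y)).comp (ContinuousLinearMap.inr ℝ (Vec n) (Vec m))) y :=
    HasFDerivAt.comp (g := Function.uncurry f) y (hf (x, y)).hasFDerivAt (hasFDerivAt_prodMk_right x y)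
  rw [grady, gradient, h.fderiv, InnerProductSpace.toDual_symm_apply]
  simp

lemma aux_inner_gradx {n m : ℕ} {f : Vec n → Vec m → ℝ} (hf : Differentiable ℝ (Function.uncurry f))
    (x w : Vec n) (y : Vec m) :
    inner ℝ (gradx f x y) w = fderiv ℝ (Function.uncurry f) (x, y) (w, 0) := by
  have h : HasFDerivAt (fun x' => f x' y)
      ((fderiv ℝ (Function.uncurry f) (x, y)).comp (ContinuousLinearMap.inl ℝ (Vec n) (Vec m))) x :=
    HasFDerivAt.comp (g := Function.uncurry f) (f := fun e => (e, y)) x (hf (x, y)).hasFDerivAt (hasFDerivAt_prodMk_left x y)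
  rw [gradx, gradient, h.fderiv, InnerProductSpace.toDual_symm_apply]
  simp

lemma aux_hasFDeriv_y {n m : ℕ} {f : Vec n → Vec m → ℝ} (hf : Differentiable ℝ (Function.uncurry f))
    (x : Vec n) (y : Vec m) :
    HasFDerivAt (fun y' => f x y') (InnerProductSpace.toDual ℝ _ (grady f x y)) y := by
  have h : HasFDerivAt (fun y' => f x y')
      ((fderiv ℝ (Function.uncurry f) (x, y)).comp (ContinuousLinearMap.inr ℝ (Vec n) (Vec m))) y :=
    HasFDerivAt.comp (g := Function.uncurry f) y (hf (x, y)).hasFDerivAt (hasFDerivAt_prodMk_right x y)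
  exact h.differentiableAt.hasGradientAt.hasFDerivAt

/-- chain rule for the objective along a curve -/
lemma aux_f_curve {n m : ℕ} {f : Vec n → Vec m → ℝ} (hf : Differentiable ℝ (Function.uncurry f))
    {x : ℝ → Vec n} {y : ℝ → Vec m} {x' : Vec n} {y' : Vec m} {t : ℝ}
    (hx : HasDerivAt x x' t) (hy : HasDerivAt y y' t) :
    HasDerivAt (fun t => f (x t) (y t))
      (inner ℝ (gradx f (x t) (y t)) x' + inner ℝ (grady f (x t) (y t)) y') t := by
  have h := (hf (x t, y t)).hasFDerivAt.comp_hasDerivAt t (hx.prodMk hy)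
  rw [aux_inner_gradx hf, aux_inner_grady hf, ← map_add]
  simpa [Function.comp_def, Function.uncurry] using h

lemma aux_grady_diff {n m : ℕ} {g : Vec n → Vec m → ℝ} (hg : ContDiff ℝ 2 (Function.uncurry g)) :
    Differentiable ℝ (fun p : Vec n × Vec m => grady g p.1 p.2) := by
  have h1 : Differentiable ℝ (Function.uncurry g) := hg.differentiable (by norm_num)
  have h2 : Differentiable ℝ (fderiv ℝ (Function.uncurry g)) :=
    (hg.fderiv_right (m := 1) (by norm_num)).differentiable (by norm_num)
  have e : (fun p : Vec n × Vec m => grady g p.1 p.2) = fun p =>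
      (InnerProductSpace.toDual ℝ (Vec m)).symm
        ((fderiv ℝ (Function.uncurry g) p).comp (ContinuousLinearMap.inr ℝ (Vec n) (Vec m))) := by
    funext p
    apply ext_inner_right ℝ
    intro w
    rw [aux_inner_grady h1, InnerProductSpace.toDual_symm_apply]
    simp
  rw [e]
  have h3 : Differentiable ℝ (fun p => 
      ((fderiv ℝ (Function.uncurry g) p).comp (ContinuousLinearMap.inr ℝ (Vec n) (Vec m)))) :=
    h2.clm_comp (differentiable_const _)
  exact ((InnerProductSpace.toDual ℝ (Vec m)).symm.toContinuousLinearEquiv.differentiable).comp h3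

/-- chain rule for the lower-level gradient along a curve -/
lemma aux_h_curve {n m : ℕ} {g : Vec n → Vec m → ℝ} (hg : ContDiff ℝ 2 (Function.uncurry g))
    {A : Vec n →L[ℝ] Vec m} {B : Vec m →L[ℝ] Vec m}
    {x : ℝ → Vec n} {y : ℝ → Vec m} {x' : Vec n} {y' : Vec m} {t : ℝ}
    (hA : HasFDerivAt (fun x' => grady g x' (y t)) A (x t))
    (hB : HasFDerivAt (fun y' => grady g (x t) y') B (y t))
    (hx : HasDerivAt x x' t) (hy : HasDerivAt y y' t) :
    HasDerivAt (fun t => grady g (x t) (y t)) (A x' + B y') t := by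
  have hd := (aux_grady_diff hg (x t, y t)).hasFDerivAt
  have h := hd.comp_hasDerivAt t (hx.prodMk hy)
  have hA' := hA.unique (HasFDerivAt.comp (g := fun p : Vec n × Vec m => grady g p.1 p.2) (f := fun e => (e, y t)) (x t) hd (hasFDerivAt_prodMk_left (x t) (y t)))
  have hB' := hB.unique (HasFDerivAt.comp (g := fun p : Vec n × Vec m => grady g p.1 p.2) (y t) hd (hasFDerivAt_prodMk_right (x t) (y t)))
  rw [hA', hB']
  simp only [ContinuousLinearMap.comp_apply, ← map_add]
  simpa [Function.comp_def] using h

lemma aux_symm_s7 {m : ℕ} {g : Vec m → ℝ} {h : Vec m → Vec m} {B : Vec m →L[ℝ] Vec m} {y : Vec m}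
    (hg : ∀ y, HasFDerivAt g (InnerProductSpace.toDual ℝ _ (h y)) y)
    (hB : HasFDerivAt h B y) (u w : Vec m) : inner ℝ (B u) w = inner ℝ u (B w) := by
  have h2 : HasFDerivAt (fun y => InnerProductSpace.toDual ℝ (Vec m) (h y))
      ((innerSL ℝ : Vec m →L[ℝ] Vec m →L[ℝ] ℝ).comp B) y :=
    HasFDerivAt.comp y
      ((innerSL ℝ : Vec m →L[ℝ] Vec m →L[ℝ] ℝ).hasFDerivAt) hB
  have := second_derivative_symmetric hg h2 u w
  rw [real_inner_comm (B w) u]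
  exact this

lemma aux_sc_line {m : ℕ} {g : Vec m → ℝ} {h : Vec m → Vec m} {μ : ℝ}
    (hsc : StrongConvexOn Set.univ μ g)
    (hg : ∀ y, HasFDerivAt g (InnerProductSpace.toDual ℝ _ (h y)) y) (a b : Vec m) :
    inner ℝ (h a - μ • a) (b - a) ≤ (g b - μ / 2 * ‖b‖ ^ 2) - (g a - μ / 2 * ‖a‖ ^ 2) := by
  have hc := strongConvexOn_iff_convex.1 hsc
  have hc2 := hc.comp_affineMap (AffineMap.lineMap a b : ℝ →ᵃ[ℝ] Vec m)
  have hl : HasDerivAt (fun t : ℝ => (AffineMap.lineMap a b t : Vec m)) (b - a) 0 :=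
    AffineMap.hasDerivAt_lineMap
  have h1 : HasDerivAt (fun t : ℝ => g (AffineMap.lineMap a b t)) (inner ℝ (h a) (b - a)) 0 := by
    have := (hg ((AffineMap.lineMap a b : ℝ →ᵃ[ℝ] Vec m) (0:ℝ))).comp_hasDerivAt (0:ℝ) hl
    simpa [Function.comp_def] using this
  have h2 : HasDerivAt (fun t : ℝ => ‖(AffineMap.lineMap a b t : Vec m)‖ ^ 2)
      (2 * inner ℝ a (b - a)) 0 := by
    simpa using hl.norm_sq
  have h3 := h1.sub (h2.const_mul (μ / 2))
  have h4 := hc2.le_slope_of_hasDerivAt (x := 0) (y := 1) (by simp) (by simp) (by norm_num) h3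
  simp [slope_def_field] at h4
  rw [inner_sub_left, real_inner_smul_left]
  linarith

lemma aux_sc_mono {m : ℕ} {g : Vec m → ℝ} {h : Vec m → Vec m} {μ : ℝ}
    (hsc : StrongConvexOn Set.univ μ g)
    (hg : ∀ y, HasFDerivAt g (InnerProductSpace.toDual ℝ _ (h y)) y) (a b : Vec m) :
    μ * ‖b - a‖ ^ 2 ≤ inner ℝ (h b - h a) (b - a) := by
  have h1 := aux_sc_line hsc hg a b
  have h2 := aux_sc_line hsc hg b a
  rw [← neg_sub b a, inner_neg_right] at h2
  have h3 : inner ℝ (h b - h a) (b - a) - μ * ‖b - a‖ ^ 2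
      = inner ℝ (h b - μ • b) (b - a) - inner ℝ (h a - μ • a) (b - a) := by
    rw [← real_inner_self_eq_norm_sq, ← inner_sub_left, ← real_inner_smul_left, ← inner_sub_left]
    congr 1
    rw [smul_sub]; abel
  linarith

lemma aux_coer_s7 {m : ℕ} {h : Vec m → Vec m} {μ : ℝ} {B : Vec m →L[ℝ] Vec m} {y : Vec m}
    (hm : ∀ a b, μ * ‖b - a‖ ^ 2 ≤ inner ℝ (h b - h a) (b - a))
    (hB : HasFDerivAt h B y) (w : Vec m) : μ * ‖w‖ ^ 2 ≤ inner ℝ (B w) w := by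
  have hl : HasDerivAt (fun t : ℝ => y + t • w) w 0 := by
    simpa using ((hasDerivAt_id (0:ℝ)).smul_const w).const_add y
  have h0 : HasFDerivAt h B (y + (0:ℝ) • w) := by simpa using hB
  have h1 := h0.comp_hasDerivAt (0:ℝ) hl
  have h2 : HasDerivAt (fun t : ℝ => inner ℝ (h (y + t • w)) w) (inner ℝ (B w) w) 0 := by
    simpa [Function.comp_def] using h1.inner ℝ (hasDerivAt_const (0:ℝ) w)
  have h3 := h2.sub ((hasDerivAt_id (0:ℝ)).mul_const (μ * ‖w‖ ^ 2))
  have hmono : Monotone ((fun t : ℝ => inner ℝ (h (y + t • w)) w) - fun t : ℝ => id t * (μ * ‖w‖ ^ 2)) := by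
    intro s t hst
    rcases hst.eq_or_lt with rfl | hlt
    · exact le_rfl
    have := hm (y + s • w) (y + t • w)
    have e : y + t • w - (y + s • w) = (t - s) • w := by rw [sub_smul]; abel
    rw [e, norm_smul, real_inner_smul_right, inner_sub_left, mul_pow, Real.norm_eq_abs, sq_abs] at this
    have hp : 0 < t - s := sub_pos.2 hlt
    have h5 : (t - s) * (μ * ‖w‖ ^ 2) ≤ inner ℝ (h (y + t • w)) w - inner ℝ (h (y + s • w)) w := by
      refine le_of_mul_le_mul_left ?_ hp
      linarith
    simp only [Pi.sub_apply, id]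
    linarith
  have h6 := hmono.deriv_nonneg (x := (0:ℝ))
  rw [h3.deriv] at h6
  linarith

lemma aux_pt_deriv {n m : ℕ} {A : Vec n →L[ℝ] Vec m} {B : Vec m →L[ℝ] Vec m} {α : ℝ}
    {fx : Vec n} {fy h lam : Vec m}
    (hlam : (A ∘L ContinuousLinearMap.adjoint A + B ∘L B) lam = -(A fx + B fy - α • h)) :
    A (-fx - ContinuousLinearMap.adjoint A lam) + B (-fy - B lam) = -(α • h) := by
  simp only [add_apply, ContinuousLinearMap.comp_apply] at hlam
  simp only [map_sub, map_neg]
  have : A (ContinuousLinearMap.adjoint A lam) = -(A fx + B fy - α • h) - B (B lam) := by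
    rw [← hlam]; abel
  rw [this]; abel

lemma aux_pt_coer {m : ℕ} {B : Vec m →L[ℝ] Vec m} {μ : ℝ}
    (hco : ∀ w, μ * ‖w‖ ^ 2 ≤ inner ℝ (B w) w) (w : Vec m) : μ * ‖w‖ ≤ ‖B w‖ := by
  have h1 := (hco w).trans (real_inner_le_norm _ _)
  rcases (norm_nonneg w).eq_or_lt with h0 | h0
  · rw [← h0]; simp
  · nlinarith

lemma aux_pt_F {n m : ℕ} {A : Vec n →L[ℝ] Vec m} {B : Vec m →L[ℝ] Vec m} {μ L c : ℝ}
    (hμ : 0 < μ) (hco : ∀ w, μ * ‖w‖ ^ 2 ≤ inner ℝ (B w) w) (hA : ‖A‖ ≤ L)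
    (hc : c = μ ^ 2 / (μ ^ 2 + L ^ 2))
    {fx : Vec n} {fy lam v : Vec m} (hv : B v = fy) :
    c * ‖fx - ContinuousLinearMap.adjoint A v‖ ^ 2 ≤
      ‖-fx - ContinuousLinearMap.adjoint A lam‖ ^ 2 + ‖-fy - B lam‖ ^ 2 := by
  set X := -fx - ContinuousLinearMap.adjoint A lam with hX
  set Y := -fy - B lam with hY
  have hL : 0 ≤ L := (norm_nonneg _).trans hA
  have h1 : μ * ‖lam + v‖ ≤ ‖Y‖ := by
    have := aux_pt_coer hco (lam + v)
    rwa [map_add, hv, ← norm_neg (B lam + fy), show -(B lam + fy) = Y by rw [hY]; abel] at this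
  have h2 : fx - ContinuousLinearMap.adjoint A v
      = -X - ContinuousLinearMap.adjoint A (lam + v) := by
    rw [hX, map_add]; abel
  have h3 : ‖ContinuousLinearMap.adjoint A (lam + v)‖ ≤ L * ‖lam + v‖ := by
    refine (ContinuousLinearMap.le_opNorm _ _).trans ?_
    rw [LinearIsometryEquiv.norm_map]
    gcongr
  have h4 : ‖fx - ContinuousLinearMap.adjoint A v‖ ≤ ‖X‖ + L * ‖lam + v‖ := by
    rw [h2]
    refine (norm_sub_le _ _).trans ?_
    rw [norm_neg]; gcongr
  have h5 : μ * ‖fx - ContinuousLinearMap.adjoint A v‖ ≤ μ * ‖X‖ + L * ‖Y‖ := by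
    nlinarith
  have h6 : (μ * ‖fx - ContinuousLinearMap.adjoint A v‖) ^ 2 ≤ (μ * ‖X‖ + L * ‖Y‖) ^ 2 := by
    gcongr
  rw [hc, div_mul_eq_mul_div, div_le_iff₀ (by positivity)]
  nlinarith [sq_nonneg (μ * ‖Y‖ - L * ‖X‖)]

lemma aux_pt_energy {n m : ℕ} {A : Vec n →L[ℝ] Vec m} {B : Vec m →L[ℝ] Vec m} {α : ℝ}
    (hs : ∀ u w, inner ℝ (B u) w = inner ℝ u (B w))
    {fx : Vec n} {fy h lam : Vec m}
    (hlam : (A ∘L ContinuousLinearMap.adjoint A + B ∘L B) lam = -(A fx + B fy - α • h)) :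
    inner ℝ fx (-fx - ContinuousLinearMap.adjoint A lam) + inner ℝ fy (-fy - B lam) =
      -(‖-fx - ContinuousLinearMap.adjoint A lam‖ ^ 2 + ‖-fy - B lam‖ ^ 2)
        + α * inner ℝ lam h := by
  have hd := aux_pt_deriv hlam
  set X := -fx - ContinuousLinearMap.adjoint A lam with hX
  set Y := -fy - B lam with hY
  have e1 : fx = -X - ContinuousLinearMap.adjoint A lam := by rw [hX]; abel
  have e2 : fy = -Y - B lam := by rw [hY]; abel
  have h1 : inner ℝ lam (A X) + inner ℝ lam (B Y) = -(α * inner ℝ lam h) := by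
    rw [← inner_add_right, hd, inner_neg_right, real_inner_smul_right]
  rw [e1, e2, inner_sub_left, inner_sub_left, inner_neg_left, inner_neg_left,
    real_inner_self_eq_norm_sq, real_inner_self_eq_norm_sq,
    ContinuousLinearMap.adjoint_inner_left, hs]
  linarith

lemma aux_pt_lam {n m : ℕ} {A : Vec n →L[ℝ] Vec m} {B : Vec m →L[ℝ] Vec m} {α μ : ℝ}
    (hμ : 0 < μ) (hco : ∀ w, μ * ‖w‖ ^ 2 ≤ inner ℝ (B w) w)
    (hs : ∀ u w, inner ℝ (B u) w = inner ℝ u (B w))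
    {fx : Vec n} {fy h lam : Vec m}
    (hlam : (A ∘L ContinuousLinearMap.adjoint A + B ∘L B) lam = -(A fx + B fy - α • h)) :
    μ ^ 2 * ‖lam‖ ≤ ‖A fx + B fy - α • h‖ := by
  have h1 : inner ℝ lam (-(A fx + B fy - α • h)) =
      ‖ContinuousLinearMap.adjoint A lam‖ ^ 2 + ‖B lam‖ ^ 2 := by
    rw [← hlam, ← real_inner_self_eq_norm_sq, ← real_inner_self_eq_norm_sq, hs,
      ContinuousLinearMap.adjoint_inner_left]
    simp [inner_add_right]
  have h2 := real_inner_le_norm lam (-(A fx + B fy - α • h))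
  rw [h1, norm_neg] at h2
  have h3 : (μ * ‖lam‖) ^ 2 ≤ ‖B lam‖ ^ 2 := by
    have := aux_pt_coer hco lam
    gcongr
  have h4 := sq_nonneg ‖ContinuousLinearMap.adjoint A lam‖
  rcases (norm_nonneg lam).eq_or_lt with h0 | h0
  · rw [← h0]; simp
  · refine le_of_mul_le_mul_left ?_ h0
    nlinarith

lemma aux_v_cont {m : ℕ} {P : Type*} [TopologicalSpace P] {B : P → Vec m →L[ℝ] Vec m}
    {φ v : P → Vec m} {μ : ℝ} (hμ : 0 < μ) (hB : Continuous B) (hφ : Continuous φ)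
    (hco : ∀ p w, μ * ‖w‖ ^ 2 ≤ inner ℝ (B p w) w) (hv : ∀ p, B p (v p) = φ p) :
    Continuous v := by
  rw [continuous_iff_continuousAt]
  intro p₀
  have h1 : Continuous fun p => μ⁻¹ * ‖φ p - B p (v p₀)‖ := by fun_prop
  have h2 : Filter.Tendsto (fun p => μ⁻¹ * ‖φ p - B p (v p₀)‖) (nhds p₀) (nhds 0) := by
    have := h1.tendsto p₀
    simpa [hv] using this
  rw [ContinuousAt, tendsto_iff_norm_sub_tendsto_zero]
  refine squeeze_zero (fun _ => norm_nonneg _) (fun p => ?_) h2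
  have := aux_pt_coer (hco p) (v p - v p₀)
  rw [map_sub, hv] at this
  rwa [← div_eq_inv_mul, le_div_iff₀' hμ]

/-- Lyapunov decrease and ergodic convergence rate for the safe gradient flow (SGF):
with `c = μ_g²/(μ_g² + (L_{yx}^g)²)`,
`β = (1/μ_g²)(C_{yx}^g C_x^f + C_{yy}^g C_y^f + α‖∇_y g(x(0),y(0))‖)` and
`E(t) = f(x(t),y(t)) − f* + β‖∇_y g(x(t),y(t))‖ + c ∫₀ᵗ ‖F(x(τ),y(τ))‖² dτ`,
one has `E(t) ≤ E(0)` for all `t ≥ 0` and the stated ergodic bound on `‖∇ℓ‖²`. -/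
theorem stmt_7 {n m : ℕ} (f g : Vec n → Vec m → ℝ)
    -- Assumption A1
    (hf : ContDiff ℝ 1 (Function.uncurry f))
    (Cxf Cyf : ℝ) (hCxf : 0 < Cxf) (hCyf : 0 < Cyf)
    (hfxB : ∀ x y, ‖gradx f x y‖ ≤ Cxf)
    (hfyB : ∀ x y, ‖grady f x y‖ ≤ Cyf)
    (Lxf Lyf : ℝ≥0)
    (hfxL : LipschitzWith Lxf fun p : Vec n × Vec m => gradx f p.1 p.2)
    (hfyL : LipschitzWith Lyf fun p : Vec n × Vec m => grady f p.1 p.2)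
    -- Assumption A2
    (hg : ContDiff ℝ 2 (Function.uncurry g))
    (μg : ℝ) (hμg : 0 < μg)
    (hsc : ∀ x, StrongConvexOn Set.univ μg (g x))
    (Lyyg Lyxg : ℝ≥0)
    (hgyLy : ∀ x, LipschitzWith Lyyg fun y => grady g x y)
    (hgyLx : ∀ y, LipschitzWith Lyxg fun x => grady g x y)
    (Gyx : Vec n → Vec m → Vec n →L[ℝ] Vec m)
    (Gyy : Vec n → Vec m → Vec m →L[ℝ] Vec m)
    (hGyx : ∀ x y, HasFDerivAt (fun x' => grady g x' y) (Gyx x y) x)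
    (hGyy : ∀ x y, HasFDerivAt (fun y' => grady g x y') (Gyy x y) y)
    (Cyxg Cyyg : ℝ≥0)
    (hGyxL : LipschitzWith Cyxg fun p : Vec n × Vec m => Gyx p.1 p.2)
    (hGyyL : LipschitzWith Cyyg fun p : Vec n × Vec m => Gyy p.1 p.2)
    (hGyxB : ∀ x y, ‖Gyx x y‖ ≤ (Cyxg : ℝ))
    (hGyyB : ∀ x y, ‖Gyy x y‖ ≤ (Cyyg : ℝ))
    -- lower-level solution map, surrogate direction `v`, and the constant `M₁`
    (ystar : Vec n → Vec m)
    (hystar : ∀ x', IsMinOn (g x') Set.univ (ystar x'))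
    (v : Vec n → Vec m → Vec m)
    (hv : ∀ x' y', Gyy x' y' (v x' y') = grady f x' y')
    (M₁ : ℝ) (hM₁ : 0 < M₁)
    (hM₁P : ∀ x' y',
      ‖gradient (fun x'' => f x'' (ystar x'')) x' - Fsur f Gyx v x' y'‖ ≤ M₁ * ‖y' - ystar x'‖)
    -- the safe gradient flow (SGF) for a parameter `α > 0`, on the time interval `t ≥ 0`:
    -- `lam t` is the dual multiplier `λ(x(t), y(t))`, characterized as the solution of
    -- `(∇²_{yx}g (∇²_{yx}g)ᵀ + (∇²_{yy}g)²) λ = −(∇²_{yx}g ∇ₓf + ∇²_{yy}g ∇_y f − α ∇_y g)`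
    (α : ℝ) (hα : 0 < α)
    (x : ℝ → Vec n) (y : ℝ → Vec m) (lam : ℝ → Vec m)
    (hlam : ∀ t, 0 ≤ t →
      (Gyx (x t) (y t) ∘L ContinuousLinearMap.adjoint (Gyx (x t) (y t))
        + Gyy (x t) (y t) ∘L Gyy (x t) (y t)) (lam t)
      = -(Gyx (x t) (y t) (gradx f (x t) (y t)) + Gyy (x t) (y t) (grady f (x t) (y t))
          - α • grady g (x t) (y t)))
    (hx : ∀ t, 0 ≤ t → HasDerivAt x
      (-gradx f (x t) (y t) - ContinuousLinearMap.adjoint (Gyx (x t) (y t)) (lam t)) t)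
    (hy : ∀ t, 0 ≤ t → HasDerivAt y
      (-grady f (x t) (y t) - Gyy (x t) (y t) (lam t)) t)
    -- `f*` is the global optimal value of `min f(x,y)` s.t. `∇_y g(x,y) = 0`
    (fstar : ℝ)
    (hfstar : IsGLB {r : ℝ | ∃ x' y', grady g x' y' = 0 ∧ f x' y' = r} fstar)
    -- the constants `c`, `β` and the Lyapunov function `E`
    (c β : ℝ)
    (hc : c = μg ^ 2 / (μg ^ 2 + (Lyxg : ℝ) ^ 2))
    (hβ : β = (1 / μg ^ 2) * ((Cyxg : ℝ) * Cxf + (Cyyg : ℝ) * Cyf + α * ‖grady g (x 0) (y 0)‖))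
    (EE : ℝ → ℝ)
    (hEE : ∀ t, EE t = f (x t) (y t) - fstar + β * ‖grady g (x t) (y t)‖
      + c * ∫ τ in (0:ℝ)..t, ‖Fsur f Gyx v (x τ) (y τ)‖ ^ 2) :
    (∀ t, 0 ≤ t → EE t ≤ EE 0) ∧
    (∀ t, 0 < t →
      (1 / t) * ∫ τ in (0:ℝ)..t, ‖gradient (fun x' => f x' (ystar x')) (x τ)‖ ^ 2
        ≤ 2 * EE 0 / (c * t)
          + ((1 - Real.exp (-2 * α * t)) / (α * t)) * (M₁ ^ 2 / μg ^ 2)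
            * ‖grady g (x 0) (y 0)‖ ^ 2) := by

  have hfd : Differentiable ℝ (Function.uncurry f) := hf.differentiable (by norm_num)
  have hgd : Differentiable ℝ (Function.uncurry g) := hg.differentiable (by norm_num)
  have hmon : ∀ x', ∀ a b, μg * ‖b - a‖ ^ 2 ≤ inner ℝ (grady g x' b - grady g x' a) (b - a) :=
    fun x' => aux_sc_mono (hsc x') (aux_hasFDeriv_y hgd x')
  have hco : ∀ x' y', ∀ w, μg * ‖w‖ ^ 2 ≤ inner ℝ (Gyy x' y' w) w :=
    fun x' y' => aux_coer_s7 (hmon x') (hGyy x' y')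
  have hsy : ∀ x' y', ∀ u w, inner ℝ (Gyy x' y' u) w = inner ℝ u (Gyy x' y' w) :=
    fun x' y' => aux_symm_s7 (aux_hasFDeriv_y hgd x') (hGyy x' y')
  have hAL : ∀ x' y', ‖Gyx x' y'‖ ≤ (Lyxg : ℝ) := by
    intro x' y'
    rw [← (hGyx x' y').fderiv]
    exact norm_fderiv_le_of_lipschitz ℝ (hgyLx y')
  have hys0 : ∀ x', grady g x' (ystar x') = 0 := by
    intro x'
    have h1 : IsLocalMin (g x') (ystar x') := (hystar x').isLocalMin Filter.univ_mem
    have h2 := h1.hasFDerivAt_eq_zero (aux_hasFDeriv_y hgd x' (ystar x'))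
    simpa using h2
  have hdist : ∀ x' y', μg * ‖y' - ystar x'‖ ≤ ‖grady g x' y'‖ := by
    intro x' y'
    have h1 := hmon x' (ystar x') y'
    rw [hys0, sub_zero] at h1
    have h2 := h1.trans (real_inner_le_norm _ _)
    rcases (norm_nonneg (y' - ystar x')).eq_or_lt with h0 | h0
    · rw [← h0]; simp
    · nlinarith
  -- the lower-level gradient decays exponentially
  have hhd : ∀ t, 0 ≤ t → HasDerivAt (fun t => grady g (x t) (y t))
      (-(α • grady g (x t) (y t))) t := by
    intro t ht
    have := aux_h_curve hg (hGyx (x t) (y t)) (hGyy (x t) (y t)) (hx t ht) (hy t ht)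
    rwa [aux_pt_deriv (hlam t ht)] at this
  have hexp : ∀ t, 0 ≤ t → Real.exp (α * t) • grady g (x t) (y t) = grady g (x 0) (y 0) := by
    intro t ht
    have hd : ∀ s, 0 ≤ s → HasDerivAt (fun s => Real.exp (α * s) • grady g (x s) (y s)) 0 s := by
      intro s hs
      have h1 : HasDerivAt (fun s => Real.exp (α * s)) (Real.exp (α * s) * α) s := by
        simpa using ((hasDerivAt_id s).const_mul α).exp
      have h2 := h1.smul (hhd s hs)
      have e : Real.exp (α * s) • -(α • grady g (x s) (y s))
          + (Real.exp (α * s) * α) • grady g (x s) (y s) = 0 := by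
        rw [smul_neg, smul_smul]; simp
      rw [e] at h2
      exact h2
    have := constant_of_has_deriv_right_zero (a := 0) (b := t)
      (fun s hs => (hd s hs.1).continuousAt.continuousWithinAt)
      (fun s hs => (hd s hs.1).hasDerivWithinAt) t ⟨ht, le_rfl⟩
    simpa using this
  have hnorm : ∀ t, 0 ≤ t → ‖grady g (x t) (y t)‖ = Real.exp (-α * t) * ‖grady g (x 0) (y 0)‖ := by
    intro t ht
    rw [← hexp t ht, norm_smul, Real.norm_eq_abs, abs_of_pos (Real.exp_pos _), ← mul_assoc,
      ← Real.exp_add]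
    simp
  have hnle : ∀ t, 0 ≤ t → ‖grady g (x t) (y t)‖ ≤ ‖grady g (x 0) (y 0)‖ := by
    intro t ht
    rw [hnorm t ht]
    have : Real.exp (-α * t) ≤ 1 := Real.exp_le_one_iff.2 (by nlinarith)
    nlinarith [norm_nonneg (grady g (x 0) (y 0))]
  have hlamB : ∀ t, 0 ≤ t → ‖lam t‖ ≤ β := by
    intro t ht
    have h1 := aux_pt_lam hμg (hco (x t) (y t)) (hsy (x t) (y t)) (hlam t ht)
    have h2 : ‖Gyx (x t) (y t) (gradx f (x t) (y t)) + Gyy (x t) (y t) (grady f (x t) (y t))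
          - α • grady g (x t) (y t)‖ ≤ Cyxg * Cxf + Cyyg * Cyf + α * ‖grady g (x 0) (y 0)‖ := by
      refine (norm_sub_le _ _).trans (add_le_add ((norm_add_le _ _).trans (add_le_add ?_ ?_)) ?_)
      · exact (ContinuousLinearMap.le_opNorm _ _).trans
          (mul_le_mul (hGyxB _ _) (hfxB _ _) (norm_nonneg _) Cyxg.2)
      · exact (ContinuousLinearMap.le_opNorm _ _).trans
          (mul_le_mul (hGyyB _ _) (hfyB _ _) (norm_nonneg _) Cyyg.2)
      · rw [norm_smul, Real.norm_eq_abs, abs_of_pos hα]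
        exact mul_le_mul_of_nonneg_left (hnle t ht) hα.le
    rw [hβ, one_div, ← div_eq_inv_mul, le_div_iff₀' (by positivity)]
    exact h1.trans h2
  have hcpos : 0 < c := by rw [hc]; positivity
  -- continuity of the surrogate
  have hxc : ContinuousOn x (Ici 0) := fun t ht => (hx t ht).continuousAt.continuousWithinAt
  have hyc : ContinuousOn y (Ici 0) := fun t ht => (hy t ht).continuousAt.continuousWithinAt
  have hFc : Continuous fun p : Vec n × Vec m => Fsur f Gyx v p.1 p.2 := by
    have hvc : Continuous fun p : Vec n × Vec m => v p.1 p.2 :=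
      aux_v_cont hμg hGyyL.continuous hfyL.continuous (fun p => hco p.1 p.2) (fun p => hv p.1 p.2)
    have hadj : Continuous fun p : Vec n × Vec m => ContinuousLinearMap.adjoint (Gyx p.1 p.2) :=
      (LinearIsometryEquiv.continuous _).comp hGyxL.continuous
    exact hfxL.continuous.sub (hadj.clm_apply hvc)
  have hFc' : ContinuousOn (fun t => ‖Fsur f Gyx v (x t) (y t)‖ ^ 2) (Ici 0) :=
    ((hFc.comp_continuousOn (hxc.prodMk hyc)).norm).pow 2
  have hFint : ∀ t, IntegrableOn (fun t => ‖Fsur f Gyx v (x t) (y t)‖ ^ 2) (Icc 0 t) :=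
    fun t => (hFc'.mono Icc_subset_Ici_self).integrableOn_Icc
  -- the Lyapunov estimate
  have hLy : ∀ t, 0 ≤ t → EE t ≤ EE 0 := by
    intro t ht
    have hder : ∀ s, 0 ≤ s → HasDerivAt
        (fun s => -(f (x s) (y s) + β * (Real.exp (-α * s) * ‖grady g (x 0) (y 0)‖)))
        (-(inner ℝ (gradx f (x s) (y s))
            (-gradx f (x s) (y s) - ContinuousLinearMap.adjoint (Gyx (x s) (y s)) (lam s))
          + inner ℝ (grady f (x s) (y s)) (-grady f (x s) (y s) - Gyy (x s) (y s) (lam s))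
          + β * (Real.exp (-α * s) * (-α) * ‖grady g (x 0) (y 0)‖))) s := by
      intro s hs
      have h1 : HasDerivAt (fun s => Real.exp (-α * s)) (Real.exp (-α * s) * (-α)) s := by
        simpa using ((hasDerivAt_id s).const_mul (-α)).exp
      exact ((aux_f_curve hfd (hx s hs) (hy s hs)).add ((h1.mul_const _).const_mul β)).neg
    have key := intervalIntegral.integral_le_sub_of_hasDeriv_right_of_le
      (φ := fun s => c * ‖Fsur f Gyx v (x s) (y s)‖ ^ 2) ht
      (fun s hs => (hder s hs.1).continuousAt.continuousWithinAt)
      (fun s hs => (hder s hs.1.le).hasDerivWithinAt)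
      ((hFint t).const_mul c) (by
        intro s hs
        have hs0 := hs.1.le
        rw [aux_pt_energy (hsy (x s) (y s)) (hlam s hs0)]
        have h1 : c * ‖Fsur f Gyx v (x s) (y s)‖ ^ 2 ≤ _ :=
          aux_pt_F (lam := lam s) hμg (hco (x s) (y s)) (hAL (x s) (y s)) hc
            (fx := gradx f (x s) (y s)) (hv (x s) (y s))
        have h2 : inner ℝ (lam s) (grady g (x s) (y s)) ≤ β * ‖grady g (x s) (y s)‖ :=
          (real_inner_le_norm _ _).trans
            (mul_le_mul_of_nonneg_right (hlamB s hs0) (norm_nonneg _))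
        rw [hnorm s hs0] at h2
        have h3 := mul_le_mul_of_nonneg_left h2 hα.le
        linarith)
    rw [intervalIntegral.integral_const_mul] at key
    rw [hEE, hEE, hnorm t ht]
    simp only [intervalIntegral.integral_same]
    simp only [mul_zero, Real.exp_zero, one_mul] at key
    linarith
  refine ⟨hLy, fun t ht => ?_⟩
  have hlow : 0 ≤ f (x t) (y t) - fstar + β * ‖grady g (x t) (y t)‖ := by
    have h1 : fstar ≤ f (x t) (ystar (x t)) := hfstar.1 ⟨x t, ystar (x t), hys0 _, rfl⟩
    have h2 : ‖f (x t) (ystar (x t)) - f (x t) (y t)‖ ≤ Cyf * ‖ystar (x t) - y t‖ :=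
      Convex.norm_image_sub_le_of_norm_hasFDerivWithin_le (f := fun y' => f (x t) y') (s := univ)
        (fun z _ => (aux_hasFDeriv_y hfd (x t) z).hasFDerivWithinAt)
        (fun z _ => by simpa using hfyB (x t) z) convex_univ (mem_univ _) (mem_univ _)
    have h3 := (le_abs_self _).trans h2
    rw [norm_sub_rev] at h3
    have h4 := hdist (x t) (y t)
    set h := grady g (x t) (y t) with hh
    have h5 : μg * ‖h‖ ≤ Cyyg * ‖h‖ :=
      (aux_pt_coer (hco (x t) (y t)) h).trans ((ContinuousLinearMap.le_opNorm _ _).trans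
        (mul_le_mul_of_nonneg_right (hGyyB _ _) (norm_nonneg _)))
    have h6 : Cyf * ‖y t - ystar (x t)‖ ≤ β * ‖h‖ := by
      rw [hβ, one_div, ← div_eq_inv_mul, div_mul_eq_mul_div, le_div_iff₀ (by positivity)]
      have e1 : 0 ≤ (Cyxg : ℝ) * Cxf * ‖h‖ := by positivity
      have e2 : 0 ≤ α * ‖grady g (x 0) (y 0)‖ * ‖h‖ := by positivity
      have e3 : Cyf * (μg * (μg * ‖y t - ystar (x t)‖)) ≤ Cyf * (Cyyg * ‖h‖) := by
        exact mul_le_mul_of_nonneg_left ((mul_le_mul_of_nonneg_left h4 hμg.le).trans h5) hCyf.le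
      nlinarith
    linarith
  have hcI : c * ∫ τ in (0:ℝ)..t, ‖Fsur f Gyx v (x τ) (y τ)‖ ^ 2 ≤ EE 0 := by
    have := hLy t ht.le
    rw [hEE t] at this
    linarith
  set N := ‖grady g (x 0) (y 0)‖ with hN
  have hIexp : ∫ τ in (0:ℝ)..t, Real.exp (-2 * α * τ) = (1 - Real.exp (-2 * α * t)) / (2 * α) := by
    have hd : ∀ s ∈ uIcc 0 t, HasDerivAt (fun s => -Real.exp (-2 * α * s) / (2 * α))
        (Real.exp (-2 * α * s)) s := by
      intro s _
      have h1 : HasDerivAt (fun s => Real.exp (-2 * α * s)) (Real.exp (-2 * α * s) * (-2 * α)) s := by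
        simpa using ((hasDerivAt_id s).const_mul (-2 * α)).exp
      have h2 := h1.neg.div_const (2 * α)
      have e : -(Real.exp (-2 * α * s) * (-2 * α)) / (2 * α) = Real.exp (-2 * α * s) := by
        field_simp
      rw [e] at h2
      exact h2
    rw [intervalIntegral.integral_eq_sub_of_hasDerivAt hd
      ((by fun_prop : Continuous fun s => Real.exp (-2 * α * s)).intervalIntegrable _ _)]
    simp only [mul_zero, Real.exp_zero]
    ring
  have hi1 : IntervalIntegrable (fun τ => ‖Fsur f Gyx v (x τ) (y τ)‖ ^ 2) volume 0 t := by
    rw [intervalIntegrable_iff_integrableOn_Icc_of_le ht.le]; exact hFint t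
  have hi2 : IntervalIntegrable (fun τ => Real.exp (-2 * α * τ)) volume 0 t :=
    (by fun_prop : Continuous fun s => Real.exp (-2 * α * s)).intervalIntegrable _ _
  have hi3 := (hi1.const_mul 2).add (hi2.const_mul (2 * (M₁ ^ 2 / μg ^ 2 * N ^ 2)))
  have hmain : ∫ τ in (0:ℝ)..t, ‖gradient (fun x' => f x' (ystar x')) (x τ)‖ ^ 2 ≤
      ∫ τ in (0:ℝ)..t, (2 * ‖Fsur f Gyx v (x τ) (y τ)‖ ^ 2
        + 2 * (M₁ ^ 2 / μg ^ 2 * N ^ 2) * Real.exp (-2 * α * τ)) := by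
    rw [intervalIntegral.integral_of_le ht.le, intervalIntegral.integral_of_le ht.le]
    refine integral_mono_of_nonneg (Filter.Eventually.of_forall fun _ => by positivity) hi3.1 ?_
    filter_upwards [ae_restrict_mem measurableSet_Ioc] with s hs
    have h1 := hM₁P (x s) (y s)
    have h2 := hdist (x s) (y s)
    rw [hnorm s hs.1.le] at h2
    have h3 : ‖y s - ystar (x s)‖ ≤ Real.exp (-α * s) * N / μg := by
      rwa [le_div_iff₀' hμg]
    set a := gradient (fun x' => f x' (ystar x')) (x s)
    set b := Fsur f Gyx v (x s) (y s)
    have h4 : ‖a‖ ≤ ‖b‖ + M₁ * (Real.exp (-α * s) * N / μg) := by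
      have e1 : ‖a‖ ≤ ‖b‖ + ‖a - b‖ := by
        have := norm_add_le b (a - b)
        rwa [add_sub_cancel] at this
      have e2 := mul_le_mul_of_nonneg_left h3 hM₁.le
      linarith
    have h5 : Real.exp (-2 * α * s) = Real.exp (-α * s) ^ 2 := by
      rw [← Real.exp_nat_mul]; congr 1; push_cast; ring
    have h6 : ‖a‖ ^ 2 ≤ (‖b‖ + M₁ * (Real.exp (-α * s) * N / μg)) ^ 2 := by gcongr
    have h7 : 2 * (M₁ ^ 2 / μg ^ 2 * N ^ 2) * Real.exp (-2 * α * s)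
        = 2 * (M₁ * (Real.exp (-α * s) * N / μg)) ^ 2 := by
      rw [h5]; field_simp
    change ‖a‖ ^ 2 ≤ 2 * ‖b‖ ^ 2 + 2 * (M₁ ^ 2 / μg ^ 2 * N ^ 2) * Real.exp (-2 * α * s)
    rw [h7]
    nlinarith [sq_nonneg (‖b‖ - M₁ * (Real.exp (-α * s) * N / μg))]
  rw [intervalIntegral.integral_add (hi1.const_mul 2) (hi2.const_mul _),
    intervalIntegral.integral_const_mul, intervalIntegral.integral_const_mul, hIexp] at hmain
  have hI : ∫ τ in (0:ℝ)..t, ‖Fsur f Gyx v (x τ) (y τ)‖ ^ 2 ≤ EE 0 / c := by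
    rwa [le_div_iff₀' hcpos]
  calc _ ≤ (1 / t) * (2 * (EE 0 / c) + 2 * (M₁ ^ 2 / μg ^ 2 * N ^ 2) *
        ((1 - Real.exp (-2 * α * t)) / (2 * α))) := by
        gcongr
        linarith
    _ = _ := by field_simp

end
end

section
/- Suppose Assumption A2 holds. For every x ∈ ℝⁿ, y ∈ ℝᵐ, and every vector d ∈ ℝᵐ, defining A(x,y,d) := ∇_x f(x,y) − ∇²_{yx} g(x,y)ᵀ d and B(x,y,d) := ∇_y f(x,y) − ∇²_{yy} g(x,y) d, one has ‖F(x,y)‖ ≤ ‖A(x,y,d)‖ + (L_{yx}^g / μ_g) ‖B(x,y,d)‖. -/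
open Set MeasureTheory
open scoped NNReal RealInnerProductSpace

noncomputable section

theorem hess_lower {m : ℕ} (h : Vec m → ℝ) (μ : ℝ) (hd : Differentiable ℝ h)
    (hsc : StrongConvexOn Set.univ μ h) (y u : Vec m) (G : Vec m →L[ℝ] Vec m)
    (hG : HasFDerivAt (fun y' => gradient h y') G y) :
    μ * ‖u‖ ^ 2 ≤ inner ℝ (G u) u := by
  have hc := (strongConvexOn_iff_convex.1 hsc).comp_affineMap (AffineMap.lineMap y (y + u) : ℝ →ᵃ[ℝ] Vec m)
  have hl : ∀ t : ℝ, HasDerivAt (fun t : ℝ => y + t • u) u t := fun t => by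
    simpa using ((hasDerivAt_id t).smul_const u).const_add y
  have hφ : ((fun x => h x - μ / (2 : ℝ) * ‖x‖ ^ 2) ∘ (AffineMap.lineMap y (y + u) : ℝ →ᵃ[ℝ] Vec m))
      = fun t : ℝ => h (y + t • u) - μ / 2 * ‖y + t • u‖ ^ 2 := by
    funext t
    simp [AffineMap.lineMap_apply, add_comm]
  rw [hφ] at hc
  have hder : ∀ t : ℝ, HasDerivAt (fun t : ℝ => h (y + t • u) - μ / 2 * ‖y + t • u‖ ^ 2)
      (inner ℝ (gradient h (y + t • u)) u - μ * inner ℝ (y + t • u) u) t := fun t => by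
    have h1 := (hd (y + t • u)).hasGradientAt.hasFDerivAt.comp_hasDerivAt t (hl t)
    have h2 := ((hl t).norm_sq).const_mul (μ / 2)
    refine (h1.sub h2).congr_deriv ?_
    simp only [InnerProductSpace.toDual_apply_apply]
    ring
  have hmono := hc.monotoneOn_deriv (fun t _ => (hder t).differentiableAt)
  have he := funext fun t => (hder t).deriv
  rw [he, Set.preimage_univ, monotoneOn_univ] at hmono
  have hG' : HasFDerivAt (fun y' => gradient h y') G (y + (0 : ℝ) • u) := by simpa using hG
  have h3 := (hG'.comp_hasDerivAt (0 : ℝ) (hl 0)).inner ℝ (hasDerivAt_const (0 : ℝ) u)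
  have h4 := (((hl 0).inner ℝ (hasDerivAt_const (0 : ℝ) u))).const_mul μ
  have h5 := (h3.sub h4).nonneg_of_monotone hmono
  simp only [inner_zero_right, zero_add, real_inner_self_eq_norm_sq] at h5
  linarith

/-- for all `x, y, d`, with `A = ∇ₓf − (∇²_{yx}g)ᵀ d` and `B = ∇_y f − ∇²_{yy}g d`,
one has `‖F(x,y)‖ ≤ ‖A‖ + (L_{yx}^g/μ_g) ‖B‖`. -/
theorem stmt_8 {n m : ℕ} (f g : Vec n → Vec m → ℝ)
    (hf : ContDiff ℝ 1 (Function.uncurry f))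
    -- Assumption A2
    (hg : ContDiff ℝ 2 (Function.uncurry g))
    (μg : ℝ) (hμg : 0 < μg)
    (hsc : ∀ x, StrongConvexOn Set.univ μg (g x))
    (Lyyg Lyxg : ℝ≥0)
    (hgyLy : ∀ x, LipschitzWith Lyyg fun y => grady g x y)
    (hgyLx : ∀ y, LipschitzWith Lyxg fun x => grady g x y)
    (Gyx : Vec n → Vec m → Vec n →L[ℝ] Vec m)
    (Gyy : Vec n → Vec m → Vec m →L[ℝ] Vec m)
    (hGyx : ∀ x y, HasFDerivAt (fun x' => grady g x' y) (Gyx x y) x)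
    (hGyy : ∀ x y, HasFDerivAt (fun y' => grady g x y') (Gyy x y) y)
    (Cyxg Cyyg : ℝ≥0)
    (hGyxL : LipschitzWith Cyxg fun p : Vec n × Vec m => Gyx p.1 p.2)
    (hGyyL : LipschitzWith Cyyg fun p : Vec n × Vec m => Gyy p.1 p.2)
    -- the surrogate direction `v`
    (v : Vec n → Vec m → Vec m)
    (hv : ∀ x y, Gyy x y (v x y) = grady f x y) :
    ∀ (x : Vec n) (y : Vec m) (d : Vec m),
      ‖Fsur f Gyx v x y‖
        ≤ ‖gradx f x y - ContinuousLinearMap.adjoint (Gyx x y) d‖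
          + ((Lyxg : ℝ) / μg) * ‖grady f x y - Gyy x y d‖ := by
  intro x y d
  have hdiff : Differentiable ℝ (g x) := by
    have := (hg.differentiable (by norm_num)).comp
      ((differentiable_const x).prodMk (differentiable_id (𝕜 := ℝ) (E := Vec m)))
    exact this
  set w := v x y - d with hw
  have hB : grady f x y - Gyy x y d = Gyy x y w := by rw [hw, map_sub, hv]
  have hlow : μg * ‖w‖ ^ 2 ≤ inner ℝ (Gyy x y w) w :=
    hess_lower (g x) μg hdiff (hsc x) y w _ (hGyy x y)
  have hwB : ‖w‖ ≤ ‖Gyy x y w‖ / μg := by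
    rw [le_div_iff₀ hμg]
    have hcs := real_inner_le_norm (Gyy x y w) w
    rcases (norm_nonneg w).eq_or_lt with h0 | h0
    · rw [← h0]; simp
    · refine le_of_mul_le_mul_right ?_ h0
      nlinarith
  have hL : ‖Gyx x y‖ ≤ Lyxg := (hGyx x y).le_of_lipschitz (hgyLx y)
  have hF : Fsur f Gyx v x y = (gradx f x y - ContinuousLinearMap.adjoint (Gyx x y) d)
      - ContinuousLinearMap.adjoint (Gyx x y) w := by
    rw [Fsur, hw, map_sub]; abel
  rw [hF, hB]
  refine (norm_sub_le _ _).trans (add_le_add le_rfl ?_)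
  calc ‖ContinuousLinearMap.adjoint (Gyx x y) w‖
      ≤ ‖ContinuousLinearMap.adjoint (Gyx x y)‖ * ‖w‖ := ContinuousLinearMap.le_opNorm _ _
    _ = ‖Gyx x y‖ * ‖w‖ := by rw [LinearIsometryEquiv.norm_map]
    _ ≤ Lyxg * (‖Gyy x y w‖ / μg) := by gcongr
    _ = _ := by ring

end
end

section
/- Let α, ε > 0 and suppose Assumption A2 holds. Let t ↦ (x(t), y(t)), t ≥ 0, be a continuously differentiable solution of the relaxed safe gradient flow (RXGF). If the initial condition satisfies h(x(0), y(0)) ≤ ε², then h(x(t), y(t)) ≤ ε² for all t ≥ 0 (the sublevel set L⁻_{ε²}(h) = {(x,y) : h(x,y) ≤ ε²} is forward invariant). -/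
open Set MeasureTheory
open scoped NNReal RealInnerProductSpace

noncomputable section

/-- The compact constraint function `h(x,y) = ‖∇_y g(x,y)‖²`. -/
noncomputable def hbar {n m : ℕ} (g : Vec n → Vec m → ℝ) (x : Vec n) (y : Vec m) : ℝ :=
  ‖grady g x y‖ ^ 2

lemma aux_G {n m : ℕ} (g : Vec n → Vec m → ℝ) (hg : ContDiff ℝ 2 (Function.uncurry g)) :
    Differentiable ℝ (fun p : Vec n × Vec m => grady g p.1 p.2) := by
  have hd : Differentiable ℝ (Function.uncurry g) := hg.differentiable (by norm_num)
  have e : (fun p : Vec n × Vec m => grady g p.1 p.2) = fun p =>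
      (InnerProductSpace.toDual ℝ (Vec m)).symm
        ((fderiv ℝ (Function.uncurry g) p).comp (ContinuousLinearMap.inr ℝ (Vec n) (Vec m))) := by
    funext p
    have h1 : HasFDerivAt (fun y' => g p.1 y')
        ((fderiv ℝ (Function.uncurry g) p).comp (ContinuousLinearMap.inr ℝ (Vec n) (Vec m))) p.2 :=
      HasFDerivAt.comp p.2 (g := Function.uncurry g) (f := fun y' => (p.1, y'))
        (hd p).hasFDerivAt (hasFDerivAt_prodMk_right p.1 p.2)
    unfold grady gradient
    rw [h1.fderiv]
  rw [e]
  have h2 : Differentiable ℝ (fderiv ℝ (Function.uncurry g)) :=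
    (hg.fderiv_right (m := 1) (by norm_num)).differentiable (by norm_num)
  have h3 : Differentiable ℝ (fun p : Vec n × Vec m => (fderiv ℝ (Function.uncurry g) p).comp
      (ContinuousLinearMap.inr ℝ (Vec n) (Vec m))) :=
    h2.clm_comp (differentiable_const _)
  exact ((InnerProductSpace.toDual ℝ (Vec m)).symm.toContinuousLinearEquiv.toContinuousLinearMap.differentiable).comp h3

lemma aux_sc {m : ℕ} (φ : Vec m → ℝ) (hφ : Differentiable ℝ φ) (μ : ℝ)
    (hsc : StrongConvexOn Set.univ μ φ) (y : Vec m) (A : Vec m →L[ℝ] Vec m)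
    (hA : HasFDerivAt (fun y' => gradient φ y') A y) (v : Vec m) :
    μ * ‖v‖ ^ 2 ≤ ⟪A v, v⟫ := by
  rw [strongConvexOn_iff_convex] at hsc
  have hl : ∀ s : ℝ, HasDerivAt (fun s : ℝ => y + s • v) v s := fun s => by
    simpa using ((hasDerivAt_id s).smul_const v).const_add y
  set ψ : ℝ → ℝ := fun s => φ (y + s • v) - μ / 2 * ‖y + s • v‖ ^ 2 with hψ
  have hc : ConvexOn ℝ Set.univ ψ := by
    have := hsc.comp_affineMap (AffineMap.lineMap y (y + v))
    refine this.congr ?_ 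
    intro s _
    simp [hψ, AffineMap.lineMap_apply, add_comm]
  have hd : ∀ s, HasDerivAt ψ (⟪gradient φ (y + s • v), v⟫ - μ * ⟪y + s • v, v⟫) s := by
    intro s
    have h1 := (hφ (y + s • v)).hasGradientAt.hasFDerivAt.comp_hasDerivAt s (hl s)
    have h2 := ((hl s).norm_sq).const_mul (μ / 2)
    refine (h1.sub h2).congr_deriv ?_
    simp
    ring
  have hm : Monotone (deriv ψ) := by
    rw [← monotoneOn_univ]
    exact hc.monotoneOn_deriv (fun s _ => (hd s).differentiableAt)
  have he : deriv ψ = fun s => ⟪gradient φ (y + s • v), v⟫ - μ * ⟪y + s • v, v⟫ :=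
    funext fun s => (hd s).deriv
  have hdd : HasDerivAt (deriv ψ) (⟪A v, v⟫ - μ * ⟪v, v⟫) 0 := by
    rw [he]
    have hA' : HasFDerivAt (fun y' => gradient φ y') A (y + (0:ℝ) • v) := by simpa using hA
    have h1 := (hA'.comp_hasDerivAt (0:ℝ) (hl 0)).inner ℝ (hasDerivAt_const (0:ℝ) v)
    have h2 := ((hl 0).inner ℝ (hasDerivAt_const (0:ℝ) v)).const_mul μ
    refine (h1.sub h2).congr_deriv ?_
    simp
  have : 0 ≤ deriv (deriv ψ) 0 := hm.deriv_nonneg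
  rw [hdd.deriv, real_inner_self_eq_norm_sq] at this
  linarith

/-- along the relaxed safe gradient flow (RXGF), the sublevel set
`{(x,y) : h(x,y) ≤ ε²}` is forward invariant. -/
theorem stmt_10 {n m : ℕ} (f g : Vec n → Vec m → ℝ)
    (hf : ContDiff ℝ 1 (Function.uncurry f))
    -- Assumption A2
    (hg : ContDiff ℝ 2 (Function.uncurry g))
    (μg : ℝ) (hμg : 0 < μg)
    (hsc : ∀ x, StrongConvexOn Set.univ μg (g x))
    (Lyyg Lyxg : ℝ≥0)
    (hgyLy : ∀ x, LipschitzWith Lyyg fun y => grady g x y)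
    (hgyLx : ∀ y, LipschitzWith Lyxg fun x => grady g x y)
    (Gyx : Vec n → Vec m → Vec n →L[ℝ] Vec m)
    (Gyy : Vec n → Vec m → Vec m →L[ℝ] Vec m)
    (hGyx : ∀ x y, HasFDerivAt (fun x' => grady g x' y) (Gyx x y) x)
    (hGyy : ∀ x y, HasFDerivAt (fun y' => grady g x y') (Gyy x y) y)
    (Cyxg Cyyg : ℝ≥0)
    (hGyxL : LipschitzWith Cyxg fun p : Vec n × Vec m => Gyx p.1 p.2)
    (hGyyL : LipschitzWith Cyyg fun p : Vec n × Vec m => Gyy p.1 p.2)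
    -- the relaxed safe gradient flow (RXGF) with parameters `α, ε > 0`, on `t ≥ 0`:
    (α ε : ℝ) (hα : 0 < α) (hε : 0 < ε)
    (x : ℝ → Vec n) (y : ℝ → Vec m) (lam : ℝ → ℝ)
    (hlam : ∀ t, 0 ≤ t →
      ((¬(gradx (hbar g) (x t) (y t) = 0 ∧ grady (hbar g) (x t) (y t) = 0)) →
        lam t = max (-⟪gradx (hbar g) (x t) (y t), gradx f (x t) (y t)⟫
              - ⟪grady (hbar g) (x t) (y t), grady f (x t) (y t)⟫
              + α * (hbar g (x t) (y t) - ε ^ 2)) 0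
          / (‖gradx (hbar g) (x t) (y t)‖ ^ 2 + ‖grady (hbar g) (x t) (y t)‖ ^ 2)) ∧
      ((gradx (hbar g) (x t) (y t) = 0 ∧ grady (hbar g) (x t) (y t) = 0) → lam t = 0))
    (hx : ∀ t, 0 ≤ t → HasDerivAt x
      (-gradx f (x t) (y t) - lam t • gradx (hbar g) (x t) (y t)) t)
    (hy : ∀ t, 0 ≤ t → HasDerivAt y
      (-grady f (x t) (y t) - lam t • grady (hbar g) (x t) (y t)) t)
    -- the initial condition lies in the sublevel set
    (h0 : hbar g (x 0) (y 0) ≤ ε ^ 2) :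
    ∀ t, 0 ≤ t → hbar g (x t) (y t) ≤ ε ^ 2 := by
  have hG := aux_G g hg
  have hH : Differentiable ℝ (Function.uncurry (hbar g)) := hG.norm_sq ℝ
  have hgy : ∀ x, Differentiable ℝ (g x) := fun x =>
    (hg.differentiable (by norm_num)).comp (differentiable_const x |>.prodMk differentiable_id)
  -- chain rule
  have hu : ∀ t, 0 ≤ t → HasDerivAt (fun t => hbar g (x t) (y t))
      (⟪gradx (hbar g) (x t) (y t), -gradx f (x t) (y t) - lam t • gradx (hbar g) (x t) (y t)⟫
      + ⟪grady (hbar g) (x t) (y t), -grady f (x t) (y t) - lam t • grady (hbar g) (x t) (y t)⟫)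
      t := by
    intro t ht
    have hp := (hH (x t, y t)).hasFDerivAt
    have h1 := hp.comp_hasDerivAt t ((hx t ht).prodMk (hy t ht))
    have hgx : gradx (hbar g) (x t) (y t) = (InnerProductSpace.toDual ℝ (Vec n)).symm
        ((fderiv ℝ (Function.uncurry (hbar g)) (x t, y t)).comp
          (ContinuousLinearMap.inl ℝ (Vec n) (Vec m))) := by
      have : HasFDerivAt (fun x' => hbar g x' (y t)) _ (x t) :=
        HasFDerivAt.comp (x t) (g := Function.uncurry (hbar g)) (f := fun x' => (x', y t))
          hp (hasFDerivAt_prodMk_left (x t) (y t))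
      unfold gradx gradient
      rw [this.fderiv]
    have hgy : grady (hbar g) (x t) (y t) = (InnerProductSpace.toDual ℝ (Vec m)).symm
        ((fderiv ℝ (Function.uncurry (hbar g)) (x t, y t)).comp
          (ContinuousLinearMap.inr ℝ (Vec n) (Vec m))) := by
      have : HasFDerivAt (fun y' => hbar g (x t) y') _ (y t) :=
        HasFDerivAt.comp (y t) (g := Function.uncurry (hbar g)) (f := fun y' => (x t, y'))
          hp (hasFDerivAt_prodMk_right (x t) (y t))
      unfold grady gradient
      rw [this.fderiv]
    refine h1.congr_deriv ?_
    generalize -gradx f (x t) (y t) - lam t • gradx (hbar g) (x t) (y t) = a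
    generalize -grady f (x t) (y t) - lam t • grady (hbar g) (x t) (y t) = b
    rw [hgx, hgy, InnerProductSpace.toDual_symm_apply, InnerProductSpace.toDual_symm_apply]
    simp only [ContinuousLinearMap.comp_apply, ← map_add]
    simp
  -- nondegeneracy
  have hnd : ∀ a b, grady (hbar g) a b = 0 → hbar g a b = 0 := by
    intro a b h
    have h1 := (hGyy a b).norm_sq
    have h2 : HasGradientAt (fun y' => hbar g a y') (grady (hbar g) a b) b :=
      h1.differentiableAt.hasGradientAt
    rw [h] at h2
    have h3 := h1.unique h2.hasFDerivAt
    have h4 := congrArg (fun L => L (grady g a b)) h3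
    have h5 := aux_sc (g a) (hgy a) μg (hsc a) b (Gyy a b) (hGyy a b) (grady g a b)
    rw [real_inner_comm] at h5
    simp at h4
    unfold hbar
    nlinarith [sq_nonneg ‖grady g a b‖]
  -- barrier inequality
  have hb : ∀ t, 0 ≤ t → ε ^ 2 < hbar g (x t) (y t) →
      ⟪gradx (hbar g) (x t) (y t), -gradx f (x t) (y t) - lam t • gradx (hbar g) (x t) (y t)⟫
      + ⟪grady (hbar g) (x t) (y t), -grady f (x t) (y t) - lam t • grady (hbar g) (x t) (y t)⟫
      < 0 := by
    intro t ht hgt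
    have hne : grady (hbar g) (x t) (y t) ≠ 0 := fun h => by
      rw [hnd _ _ h] at hgt
      nlinarith [sq_nonneg ε]
    have hl := (hlam t ht).1 (fun h => hne h.2)
    have hpos : 0 < ‖gradx (hbar g) (x t) (y t)‖ ^ 2 + ‖grady (hbar g) (x t) (y t)‖ ^ 2 := by
      have := norm_pos_iff.2 hne
      positivity
    rw [eq_div_iff hpos.ne'] at hl
    have hmx := le_max_left (-⟪gradx (hbar g) (x t) (y t), gradx f (x t) (y t)⟫
              - ⟪grady (hbar g) (x t) (y t), grady f (x t) (y t)⟫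
              + α * (hbar g (x t) (y t) - ε ^ 2)) 0
    rw [← hl] at hmx
    simp only [inner_sub_right, inner_neg_right, inner_smul_right, real_inner_self_eq_norm_sq]
    have := mul_pos hα (sub_pos.2 hgt)
    linarith
  intro t ht
  refine le_of_forall_pos_le_add fun δ hδ => ?_
  refine image_le_of_deriv_right_lt_deriv_boundary (a := 0) (b := t)
    (f := fun t => hbar g (x t) (y t)) (B := fun _ => ε ^ 2 + δ) (B' := fun _ => 0)
    (fun s hs => (hu s hs.1).continuousAt.continuousWithinAt)
    (fun s hs => (hu s hs.1).hasDerivWithinAt) (by linarith)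
    (fun s => hasDerivAt_const s _) (fun s hs he => hb s hs.1 ?_) ⟨ht, le_rfl⟩
  linarith

end
end

section
/- Fix (x,y) ∈ ℝⁿ × ℝᵐ and α, ε > 0. If (u,v) = (0,0) is a minimizer of QP (RXSF) at (x,y), then there exists λ̃ ≥ 0 such that the KKT conditions of the relaxed single-level problem hold at (x,y): ∇_x f(x,y) + λ̃ ∇_x h(x,y) = 0, ∇_y f(x,y) + λ̃ ∇_y h(x,y) = 0, λ̃ (h(x,y) − ε²) = 0, and h(x,y) − ε² ≤ 0. -/
open Set MeasureTheory
open scoped NNReal RealInnerProductSpace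

noncomputable section

theorem qp_aux {E F : Type*} [NormedAddCommGroup E] [InnerProductSpace ℝ E]
    [NormedAddCommGroup F] [InnerProductSpace ℝ F] (a p : E) (b q : F) (c : ℝ) (hc : c ≤ 0)
    (H : ∀ (u : E) (v : F), ⟪a, u⟫ + ⟪b, v⟫ + c ≤ 0 →
      (1:ℝ)/2 * ‖(0 : E) + p‖ ^ 2 + (1:ℝ)/2 * ‖(0 : F) + q‖ ^ 2
        ≤ (1:ℝ)/2 * ‖u + p‖ ^ 2 + (1:ℝ)/2 * ‖v + q‖ ^ 2) :
    ∃ lam : ℝ, 0 ≤ lam ∧ p + lam • a = 0 ∧ q + lam • b = 0 ∧ lam * c = 0 := by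
  have H2 : ∀ (u : E) (v : F), ⟪a, u⟫ + ⟪b, v⟫ + c ≤ 0 →
      0 ≤ ⟪u, u⟫ + ⟪v, v⟫ + 2 * (⟪u, p⟫ + ⟪v, q⟫) := by
    intro u v h
    have := H u v h
    rw [norm_add_sq_real u, norm_add_sq_real v, zero_add, zero_add] at this
    rw [real_inner_self_eq_norm_sq, real_inner_self_eq_norm_sq]
    linarith
  have Z : ∀ (u : E) (v : F), ⟪u, u⟫ + ⟪v, v⟫ ≤ 0 → u = 0 ∧ v = 0 := by
    intro u v h
    have h1 : 0 ≤ ⟪u, u⟫ := real_inner_self_nonneg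
    have h2 : 0 ≤ ⟪v, v⟫ := real_inner_self_nonneg
    exact ⟨inner_self_eq_zero (𝕜 := ℝ) |>.1 (by linarith),
      inner_self_eq_zero (𝕜 := ℝ) |>.1 (by linarith)⟩
  have T : ∀ t : ℝ, 0 < t → t ≤ 1 → -t * (⟪a, p⟫ + ⟪b, q⟫) + c ≤ 0 → p = 0 ∧ q = 0 := by
    intro t ht ht1 h
    apply Z
    have := H2 (-t • p) (-t • q) (by rw [real_inner_smul_right, real_inner_smul_right]; linarith)
    simp only [real_inner_smul_right, real_inner_smul_left] at this
    have h3 : 0 ≤ (t * (2 - t)) * (-(⟪p, p⟫ + ⟪q, q⟫)) := by linarith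
    have h4 : 0 < t * (2 - t) := mul_pos ht (by linarith)
    have := nonneg_of_mul_nonneg_right h3 h4
    linarith
  rcases hc.lt_or_eq with hc | hc
  · obtain ⟨s, hs⟩ : ∃ s, s = ⟪a, p⟫ + ⟪b, q⟫ := ⟨_, rfl⟩
    rw [← hs] at T
    have hA := abs_nonneg s
    have hD : 0 < |s| - c := by linarith
    have hx : (-c) / (|s| - c) * (|s| - c) = -c := div_mul_cancel₀ _ hD.ne'
    have ht : 0 < (-c) / (|s| - c) := div_pos (by linarith) hD
    obtain ⟨h1, h2⟩ := T ((-c) / (|s| - c)) ht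
      (by rw [div_le_one hD]; linarith)
      (by nlinarith [neg_abs_le s])
    exact ⟨0, le_rfl, by simp [h1], by simp [h2], by simp⟩
  · subst hc
    rcases le_or_gt 0 (⟪a, p⟫ + ⟪b, q⟫) with hs | hs
    · obtain ⟨h1, h2⟩ := T 1 one_pos le_rfl (by linarith)
      exact ⟨0, le_rfl, by simp [h1], by simp [h2], by simp⟩
    · have h1 : 0 ≤ ⟪a, a⟫ := real_inner_self_nonneg
      have h2 : 0 ≤ ⟪b, b⟫ := real_inner_self_nonneg
      have hA : 0 < ⟪a, a⟫ + ⟪b, b⟫ := by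
        by_contra hn
        obtain ⟨ha, hb⟩ := Z a b (by linarith)
        simp [ha, hb] at hs
      obtain ⟨l, hl⟩ : ∃ l, l = -(⟪a, p⟫ + ⟪b, q⟫) / (⟪a, a⟫ + ⟪b, b⟫) := ⟨_, rfl⟩
      have hl0 : 0 ≤ l := by rw [hl]; exact div_nonneg (by linarith) hA.le
      have hlA : l * (⟪a, a⟫ + ⟪b, b⟫) = -(⟪a, p⟫ + ⟪b, q⟫) := by
        rw [hl]; exact div_mul_cancel₀ _ hA.ne'
      have h3 := H2 (-(p + l • a)) (-(q + l • b)) (by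
        simp only [inner_neg_right, inner_add_right, real_inner_smul_right]; linarith)
      obtain ⟨e1, e2⟩ := Z (p + l • a) (q + l • b) (by
        simp only [inner_neg_right, inner_neg_left, inner_add_right, inner_add_left,
          real_inner_smul_right, real_inner_smul_left] at h3 ⊢
        have h5 : l * (l * (⟪a, a⟫ + ⟪b, b⟫)) = l * -(⟪a, p⟫ + ⟪b, q⟫) := by rw [hlA]
        have e3 : ⟪p, a⟫ = ⟪a, p⟫ := real_inner_comm a p
        have e4 : ⟪q, b⟫ = ⟪b, q⟫ := real_inner_comm b q
        rw [e3, e4] at h3 ⊢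
        linarith)
      exact ⟨l, hl0, e1, e2, by simp⟩

/-- if `(u,v) = (0,0)` is a minimizer of the QP (RXSF) at `(x,y)`, then there exists
`λ̃ ≥ 0` such that the KKT conditions of the relaxed single-level problem hold at `(x,y)`. -/
theorem stmt_11 {n m : ℕ} (f g : Vec n → Vec m → ℝ)
    (hf : ContDiff ℝ 1 (Function.uncurry f))
    (hg : ContDiff ℝ 2 (Function.uncurry g))
    (x : Vec n) (y : Vec m) (α ε : ℝ) (hα : 0 < α) (hε : 0 < ε)
    -- `(0,0)` is feasible for QP (RXSF),
    (h0feas : ⟪gradx (hbar g) x y, (0 : Vec n)⟫ + ⟪grady (hbar g) x y, (0 : Vec m)⟫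
      + α * (hbar g x y - ε ^ 2) ≤ 0)
    -- and `(0,0)` minimizes the objective among all feasible points.
    (h0min : ∀ (u : Vec n) (v : Vec m),
      ⟪gradx (hbar g) x y, u⟫ + ⟪grady (hbar g) x y, v⟫ + α * (hbar g x y - ε ^ 2) ≤ 0 →
      (1:ℝ)/2 * ‖(0 : Vec n) + gradx f x y‖ ^ 2 + (1:ℝ)/2 * ‖(0 : Vec m) + grady f x y‖ ^ 2
        ≤ (1:ℝ)/2 * ‖u + gradx f x y‖ ^ 2 + (1:ℝ)/2 * ‖v + grady f x y‖ ^ 2) :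
    ∃ lam : ℝ, 0 ≤ lam ∧
      gradx f x y + lam • gradx (hbar g) x y = 0 ∧
      grady f x y + lam • grady (hbar g) x y = 0 ∧
      lam * (hbar g x y - ε ^ 2) = 0 ∧
      hbar g x y - ε ^ 2 ≤ 0 := by
  have hc : α * (hbar g x y - ε ^ 2) ≤ 0 := by simpa using h0feas
  obtain ⟨l, h1, h2, h3, h4⟩ := qp_aux _ _ _ _ _ hc h0min
  refine ⟨l, h1, h2, h3, ?_, ?_⟩
  · have : α * (l * (hbar g x y - ε ^ 2)) = 0 := by linarith
    exact (mul_eq_zero.1 this).resolve_left hα.ne'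
  · by_contra hn
    have := mul_pos hα (not_le.1 hn)
    linarith

end
end
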